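/- arXiv:1503.02937 — 3 statements merged into one kernel-verified Lean document; each statement's English description precedes it below -/
import Mathlib

section
/- The maximum size of a 2-arc in PHG(2, ℤ/4ℤ) is 7: there exists a set of 7 points of PHG(2, ℤ/4ℤ) with at most 2 points on each line, but every set of 8 points of PHG(2, ℤ/4ℤ) contains 3 points lying on a common line. -/
/-- A point of a projective Hjelmslev geometry PHG(n-1, R): a free rank-1 submodule
of Rⁿ, i.e. the R-span of a vector having at least one unit coordinate. -/
def IsPoint {R : Type} [CommRing R] {n : ℕ} (P : Submodule R (Fin n → R)) : Prop :=
  ∃ v : Fin n → R, (∃ i, IsUnit (v i)) ∧ P = Submodule.span R {v}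

/-- A free rank-k submodule of Rⁿ: a submodule linearly isomorphic to Rᵏ. -/
def IsFreeRank {R : Type} [CommRing R] {n : ℕ} (k : ℕ) (L : Submodule R (Fin n → R)) : Prop :=
  Nonempty ((Fin k → R) ≃ₗ[R] L)

/-- A line of PHG(2, R): a free rank-2 submodule of R³. -/
abbrev IsLine {R : Type} [CommRing R] (L : Submodule R (Fin 3 → R)) : Prop := IsFreeRank 2 L

abbrev R4 := ZMod 4

/-!
The upper bound is `q² + q + 1` over every finite local ring `R` whose residue field has `q`
elements and whose maximal ideal is generated by some `π` with `π² = 0`. If no two points of a 2-arc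
are neighbours, they reduce to distinct points of the projective plane of order `q`. Otherwise let
`⟨u⟩` and `⟨c u + π a⟩` be neighbours in the arc. The line `h ⬝ x = 0` through `⟨u⟩` and a third
point of the arc misses the second point, so `π (h ⬝ a) ≠ 0`; hence `h ⬝ a` is a unit and can be
scaled to `1`. There are at most `|R| ≤ q²` vectors `h` with `h ⬝ u = 0` and `h ⬝ a = 1`, and
distinct third points lie on distinct lines through `⟨u⟩`, so the arc has at most `q² + 2` points.

Over `ℤ/4ℤ` the bound is attained by the nonzero Teichmüller elements of the Galois ring `GR(4, 3)`.
-/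

open Matrix Module IsLocalRing
open scoped LinearAlgebra.Projectivization

section CommRing

variable {R : Type} [CommRing R] {n : ℕ}

/-- A vector with a unit coordinate, that is, one whose span is a point (`IsPoint`). -/
def HasUnitCoord (v : Fin n → R) : Prop := ∃ i, IsUnit (v i)

/-- The hyperplane `h ⬝ᵥ x = 0`, given by the dual coordinates `h`. -/
def hyperplane (h : Fin n → R) : Submodule R (Fin n → R) := LinearMap.ker (dotProductBilin R R h)

/-- The neighbour relation of a projective Hjelmslev plane over a local ring, for generating vectors
instead of points: linear dependence of `u` and `w` over the residue field. -/
def IsNeighbour (u w : Fin 3 → R) : Prop := ¬ HasUnitCoord (u ⨯₃ w)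

/-- A 2-arc without repeated points: a set of points, no three of which are collinear.
This is phrased by triples since `Set.ncard` is `0` on infinite sets. -/
structure IsTwoArc (S : Set (Submodule R (Fin 3 → R))) : Prop where
  isPoint : ∀ P ∈ S, IsPoint P
  not_collinear : ∀ L, IsLine L → ∀ P ∈ S, ∀ Q ∈ S, ∀ T ∈ S, P ≠ Q → P ≠ T → Q ≠ T →
    P ≤ L → Q ≤ L → ¬ T ≤ L

theorem mem_hyperplane {h x : Fin n → R} : x ∈ hyperplane h ↔ h ⬝ᵥ x = 0 := Iff.rfl

theorem span_singleton_le_hyperplane {h x : Fin n → R} :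
    Submodule.span R {x} ≤ hyperplane h ↔ h ⬝ᵥ x = 0 := by
  rw [Submodule.span_singleton_le_iff_mem, mem_hyperplane]

theorem HasUnitCoord.isFreeRank_hyperplane {h : Fin (n + 1) → R} (hh : HasUnitCoord h) :
    IsFreeRank n (hyperplane h) := by
  obtain ⟨i, u, hu⟩ := hh
  have mem_iff (x : Fin (n + 1) → R) :
      x ∈ hyperplane h ↔ x i = -(↑u⁻¹ * ∑ j, h (i.succAbove j) * x (i.succAbove j)) := by
    rw [mem_hyperplane, dotProduct, Fin.sum_univ_succAbove _ i, ← hu, ← mul_neg,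
      Units.eq_inv_mul_iff_mul_eq, eq_neg_iff_add_eq_zero]
  let forget : hyperplane h →ₗ[R] Fin n → R :=
    (LinearMap.funLeft R R i.succAbove).comp (hyperplane h).subtype
  have forget_injective : Function.Injective forget := by
    rintro ⟨x, hx⟩ ⟨y, hy⟩ hxy
    have off_i (j : Fin n) : x (i.succAbove j) = y (i.succAbove j) := congrFun hxy j
    refine Subtype.ext (funext fun j => ?_)
    rcases Fin.eq_self_or_eq_succAbove i j with rfl | ⟨j, rfl⟩
    · simp only [(mem_iff x).1 hx, (mem_iff y).1 hy, off_i]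
    · exact off_i j
  have forget_surjective : Function.Surjective forget := fun y =>
    ⟨⟨i.insertNth (-(↑u⁻¹ * ∑ j, h (i.succAbove j) * y j)) y, (mem_iff _).2 (by simp)⟩,
      funext fun j => Fin.insertNth_apply_succAbove (α := fun _ => R) i _ y j⟩
  exact ⟨(LinearEquiv.ofBijective forget ⟨forget_injective, forget_surjective⟩).symm⟩

theorem IsFreeRank.det_eq_zero {k : ℕ} {L : Submodule R (Fin n → R)} (hL : IsFreeRank k L)
    (hkn : k < n) {v : Fin n → Fin n → R} (hv : ∀ i, v i ∈ L) : (Matrix.of v).det = 0 := by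
  obtain ⟨φ⟩ := hL
  have restrict_eq_zero : (detRowAlternating (R := R)).compLinearMap L.subtype = 0 :=
    Basis.ext_alternating ((Pi.basisFun R (Fin k)).map φ) fun σ hσ =>
      absurd (Fintype.card_le_of_injective σ hσ) (by simpa using hkn)
  exact DFunLike.congr_fun restrict_eq_zero fun i => ⟨v i, hv i⟩

theorem isTwoArc_range_span {ι : Type*} {v : ι → Fin 3 → R} (hv : ∀ i, HasUnitCoord (v i))
    (htriple : ∀ i j k, i ≠ j → i ≠ k → j ≠ k → v i ⬝ᵥ v j ⨯₃ v k ≠ 0) :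
    IsTwoArc (Set.range fun i => Submodule.span R {v i}) where
  isPoint := Set.forall_mem_range.2 fun i => ⟨v i, hv i, rfl⟩
  not_collinear := by
    rintro L hL _ ⟨i, rfl⟩ _ ⟨j, rfl⟩ _ ⟨k, rfl⟩ hij hik hjk hi hj hk
    simp only [Submodule.span_singleton_le_iff_mem] at hi hj hk
    have ne_of_span_ne {i j : ι} : Submodule.span R {v i} ≠ Submodule.span R {v j} → i ≠ j :=
      ne_of_apply_ne fun i => Submodule.span R {v i}
    refine htriple i j k (ne_of_span_ne hij) (ne_of_span_ne hik) (ne_of_span_ne hjk) ?_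
    rw [triple_product_eq_det]
    exact hL.det_eq_zero (by decide) (Fin.forall_fin_succ.2 ⟨hi, Fin.forall_fin_two.2 ⟨hj, hk⟩⟩)

theorem IsTwoArc.ncard_sep_le_two {S : Set (Submodule R (Fin 3 → R))} (hS : IsTwoArc S)
    (hfin : S.Finite) {L : Submodule R (Fin 3 → R)} (hL : IsLine L) :
    {P ∈ S | P ≤ L}.ncard ≤ 2 := by
  by_contra! h
  obtain ⟨P, Q, T, ⟨hP, hPL⟩, ⟨hQ, hQL⟩, ⟨hT, hTL⟩, hPQ, hPT, hQT⟩ :=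
    (Set.two_lt_ncard_iff (hfin.subset (Set.sep_subset _ _))).1 h
  exact hS.not_collinear L hL P hP Q hQ T hT hPQ hPT hQT hPL hQL hTL

theorem mul_sub_mul_mem_of_cross_mem {I : Ideal R} {u x : Fin 3 → R}
    (h : ∀ k, (u ⨯₃ x) k ∈ I) (i j : Fin 3) : u i * x j - u j * x i ∈ I :=
  match i, j with
  | 0, 0 | 1, 1 | 2, 2 => by simp
  | 1, 2 => h 0
  | 2, 0 => h 1
  | 0, 1 => h 2
  | 2, 1 => sub_mem_comm_iff.1 (h 0)
  | 0, 2 => sub_mem_comm_iff.1 (h 1)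
  | 1, 0 => sub_mem_comm_iff.1 (h 2)

theorem span_singleton_eq_of_eq_smul {u w : Fin n → R} (hw : HasUnitCoord w) {c : R}
    (h : w = c • u) : Submodule.span R {u} = Submodule.span R {w} := by
  obtain ⟨i, hi⟩ := hw
  rw [h] at hi
  have hc : IsUnit c := isUnit_of_mul_isUnit_left hi
  rw [h, Submodule.span_singleton_smul_eq hc]

/-- If `R` is local, the vectors `h` are normalized dual coordinates of the lines through `⟨u⟩`
whose reduction modulo the maximal ideal misses `a`. -/
theorem ncard_dotProduct_eq_zero_one_le [Finite R] {u a : Fin 3 → R}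
    (hua : HasUnitCoord (u ⨯₃ a)) :
    {h : Fin 3 → R | h ⬝ᵥ u = 0 ∧ h ⬝ᵥ a = 1}.ncard ≤ Nat.card R := by
  obtain ⟨i, hi⟩ := hua
  rw [← Set.ncard_univ]
  refine Set.ncard_le_ncard_of_injOn (· i) (fun _ _ => Set.mem_univ _) ?_
  rintro h ⟨hu, ha⟩ h' ⟨hu', ha'⟩ hi_eq
  have cross_eq_zero : (u ⨯₃ a) ⨯₃ (h - h') = 0 := by
    rw [cross_cross_eq_smul_sub_smul, dotProduct_comm u, dotProduct_comm a, sub_dotProduct,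
      sub_dotProduct, hu, hu', ha, ha', sub_self, sub_self, zero_smul, zero_smul, sub_self]
  funext j
  have hj : (u ⨯₃ a) i * (h - h') j - (u ⨯₃ a) j * (h - h') i = 0 :=
    mul_sub_mul_mem_of_cross_mem (I := ⊥) (by simp [cross_eq_zero]) i j
  rw [Pi.sub_apply h h' i, sub_eq_zero.2 hi_eq, mul_zero, sub_zero, hi.mul_right_eq_zero] at hj
  exact sub_eq_zero.1 hj

end CommRing

section LocalRing

variable {R : Type} [CommRing R] [IsLocalRing R] {n : ℕ}

theorem HasUnitCoord.of_isUnit_dotProduct {h a : Fin n → R} (ha : IsUnit (h ⬝ᵥ a)) :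
    HasUnitCoord h := by
  by_contra hh
  have mem (i : Fin n) : h i ∈ maximalIdeal R := fun hi => hh ⟨i, hi⟩
  exact Ideal.sum_mem _ (fun i _ => Ideal.mul_mem_right (a i) _ (mem i)) ha

theorem HasUnitCoord.residue_comp_ne_zero {v : Fin n → R} (hv : HasUnitCoord v) :
    residue R ∘ v ≠ 0 := by
  obtain ⟨i, hi⟩ := hv
  exact fun h => (residue_ne_zero_iff_isUnit _).2 hi (congrFun h i)

theorem isNeighbour_of_smul_residue_comp_eq {u w : Fin 3 → R} {c : ResidueField R}
    (h : c • residue R ∘ w = residue R ∘ u) : IsNeighbour u w := by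
  intro hcross
  have map_cross : residue R ∘ (u ⨯₃ w) = (residue R ∘ u) ⨯₃ (residue R ∘ w) := by
    ext i
    fin_cases i <;> simp [cross_apply]
  refine hcross.residue_comp_ne_zero ?_
  rw [map_cross, ← h, map_smul, LinearMap.smul_apply, cross_self, smul_zero]

instance [Finite R] : Finite (ResidueField R) := .of_surjective _ residue_surjective

theorem exists_isNeighbour_of_lt_ncard [Finite R] {S : Set (Submodule R (Fin 3 → R))}
    (hS : ∀ P ∈ S, IsPoint P)
    (hcard : Nat.card (ResidueField R) ^ 2 + Nat.card (ResidueField R) + 1 < S.ncard) :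
    ∃ u w : Fin 3 → R, HasUnitCoord u ∧ HasUnitCoord w ∧ Submodule.span R {u} ∈ S ∧
      Submodule.span R {w} ∈ S ∧ Submodule.span R {u} ≠ Submodule.span R {w} ∧ IsNeighbour u w := by
  choose! v hv hspan using hS
  have hres (P : S) : residue R ∘ v P ≠ 0 :=
    HasUnitCoord.residue_comp_ne_zero (hv P P.2)
  let neighbourClass (P : S) : ℙ (ResidueField R) (Fin 3 → ResidueField R) := .mk _ _ (hres P)
  have not_injective : ¬ Function.Injective neighbourClass := by
    intro hinj
    have hle := Nat.card_le_card_of_injective neighbourClass hinj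
    rw [Nat.card_coe_set_eq, Projectivization.card_of_finrank _ _ (finrank_fin_fun _)] at hle
    simp only [Finset.sum_range_succ, Finset.sum_range_zero, pow_zero, pow_one] at hle
    lia
  obtain ⟨⟨P, hP⟩, ⟨Q, hQ⟩, hclass, hPQ⟩ := Function.not_injective_iff.1 not_injective
  obtain ⟨c, hc⟩ := (Projectivization.mk_eq_mk_iff' _ _ _ (hres _) (hres _)).1 hclass
  refine ⟨v P, v Q, hv P hP, hv Q hQ, hspan P hP ▸ hP, hspan Q hQ ▸ hQ, ?_,
    isNeighbour_of_smul_residue_comp_eq hc⟩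
  rw [← hspan P hP, ← hspan Q hQ]
  exact fun h => hPQ (Subtype.ext h)

variable {π : R}

theorem IsNeighbour.exists_eq_smul_add_smul (hπ : maximalIdeal R = Ideal.span {π})
    {u x : Fin 3 → R} (hu : HasUnitCoord u) (hux : IsNeighbour u x) :
    ∃ (c : R) (y : Fin 3 → R), x = c • u + π • y := by
  obtain ⟨i, r, hr⟩ := hu
  have hmem (j : Fin 3) : π ∣ u i * x j - u j * x i := by
    rw [← Ideal.mem_span_singleton, ← hπ]
    refine mul_sub_mul_mem_of_cross_mem (fun k => ?_) i j
    exact (mem_maximalIdeal _).2 fun hk => hux ⟨k, hk⟩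
  choose y hy using hmem
  refine ⟨↑r⁻¹ * x i, (↑r⁻¹ : R) • y, funext fun j => r.isUnit.mul_left_cancel ?_⟩
  simp only [Pi.add_apply, Pi.smul_apply, smul_eq_mul]
  linear_combination hy j + x j * hr - (x i * u j + π * y j) * r.mul_inv

theorem IsNeighbour.exists_hasUnitCoord_cross
    (hπ : maximalIdeal R = Ideal.span {π}) (hsq : π ^ 2 = 0) {u w : Fin 3 → R}
    (hu : HasUnitCoord u) (hw : HasUnitCoord w)
    (hne : Submodule.span R {u} ≠ Submodule.span R {w}) (huw : IsNeighbour u w) :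
    ∃ (c : R) (a : Fin 3 → R), w = c • u + π • a ∧ HasUnitCoord (u ⨯₃ a) := by
  obtain ⟨c, a, rfl⟩ := huw.exists_eq_smul_add_smul hπ hu
  refine ⟨c, a, rfl, ?_⟩
  by_contra hua
  obtain ⟨d, y, rfl⟩ := IsNeighbour.exists_eq_smul_add_smul hπ hu hua
  refine hne (span_singleton_eq_of_eq_smul hw (c := c + π * d) ?_)
  rw [smul_add, smul_smul, smul_smul, ← sq, hsq, zero_smul, add_zero, add_smul]

theorem exists_hyperplane_of_span_ne
    (hπ : maximalIdeal R = Ideal.span {π}) (hsq : π ^ 2 = 0) {u w : Fin 3 → R}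
    (hu : HasUnitCoord u) (hw : HasUnitCoord w)
    (hne : Submodule.span R {u} ≠ Submodule.span R {w}) :
    ∃ h, HasUnitCoord h ∧ h ⬝ᵥ u = 0 ∧ h ⬝ᵥ w = 0 := by
  by_cases huw : HasUnitCoord (u ⨯₃ w)
  · refine ⟨u ⨯₃ w, huw, ?_, ?_⟩
    · rw [dotProduct_comm, dot_self_cross]
    · rw [dotProduct_comm, dot_cross_self]
  · obtain ⟨c, a, rfl, hua⟩ := IsNeighbour.exists_hasUnitCoord_cross hπ hsq hu hw hne huw
    refine ⟨u ⨯₃ a, hua, ?_, ?_⟩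
    · rw [dotProduct_comm, dot_self_cross]
    · rw [dotProduct_comm, add_dotProduct, smul_dotProduct, smul_dotProduct, dot_self_cross,
        dot_cross_self, smul_zero, smul_zero, add_zero]

theorem IsTwoArc.exists_le_hyperplane_dotProduct_eq_one
    (hπ : maximalIdeal R = Ideal.span {π}) (hsq : π ^ 2 = 0)
    {S : Set (Submodule R (Fin 3 → R))} (hS : IsTwoArc S) {c : R} {u a : Fin 3 → R}
    (hu : HasUnitCoord u) (huS : Submodule.span R {u} ∈ S)
    (hwS : Submodule.span R {c • u + π • a} ∈ S)
    (hne : Submodule.span R {u} ≠ Submodule.span R {c • u + π • a})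
    {T : Submodule R (Fin 3 → R)} (hT : T ∈ S) (huT : Submodule.span R {u} ≠ T)
    (hwT : Submodule.span R {c • u + π • a} ≠ T) :
    ∃ h, h ⬝ᵥ u = 0 ∧ h ⬝ᵥ a = 1 ∧ T ≤ hyperplane h := by
  obtain ⟨t, ht, rfl⟩ := hS.isPoint T hT
  obtain ⟨h, hh, hhu, hht⟩ := exists_hyperplane_of_span_ne hπ hsq hu ht huT
  have ha : IsUnit (h ⬝ᵥ a) := by
    by_contra ha
    obtain ⟨s, hs⟩ : π ∣ h ⬝ᵥ a := by
      rw [← Ideal.mem_span_singleton, ← hπ]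
      exact ha
    have hhw : h ⬝ᵥ (c • u + π • a) = 0 := by
      rw [dotProduct_add, dotProduct_smul, dotProduct_smul, hhu, hs, smul_zero, zero_add,
        smul_eq_mul, ← mul_assoc, ← sq, hsq, zero_mul]
    exact hS.not_collinear _ hh.isFreeRank_hyperplane _ huS _ hwS _ hT hne huT hwT
      (span_singleton_le_hyperplane.2 hhu) (span_singleton_le_hyperplane.2 hhw)
      (span_singleton_le_hyperplane.2 hht)
  obtain ⟨r, hr⟩ := ha
  refine ⟨(↑r⁻¹ : R) • h, ?_, ?_, span_singleton_le_hyperplane.2 ?_⟩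
  · rw [smul_dotProduct, hhu, smul_zero]
  · rw [smul_dotProduct, ← hr, smul_eq_mul, r.inv_mul]
  · rw [smul_dotProduct, hht, smul_zero]

theorem IsTwoArc.ncard_le_card_add_two [Finite R]
    (hπ : maximalIdeal R = Ideal.span {π}) (hsq : π ^ 2 = 0)
    {S : Set (Submodule R (Fin 3 → R))} (hS : IsTwoArc S) {u w : Fin 3 → R}
    (hu : HasUnitCoord u) (hw : HasUnitCoord w) (huS : Submodule.span R {u} ∈ S)
    (hwS : Submodule.span R {w} ∈ S) (hne : Submodule.span R {u} ≠ Submodule.span R {w})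
    (huw : IsNeighbour u w) : S.ncard ≤ Nat.card R + 2 := by
  obtain ⟨c, a, rfl, hua⟩ := huw.exists_hasUnitCoord_cross hπ hsq hu hw hne
  set P := Submodule.span R {u}
  set Q := Submodule.span R {c • u + π • a}
  have hrest : ∀ T ∈ S \ {P, Q}, ∃ h, h ⬝ᵥ u = 0 ∧ h ⬝ᵥ a = 1 ∧ T ≤ hyperplane h := by
    rintro T ⟨hT, hTPQ⟩
    rw [Set.mem_insert_iff, Set.mem_singleton_iff, not_or] at hTPQ
    exact hS.exists_le_hyperplane_dotProduct_eq_one hπ hsq hu huS hwS hne hT (Ne.symm hTPQ.1)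
      (Ne.symm hTPQ.2)
  choose! h hhu hha hTh using hrest
  have h_injOn : Set.InjOn h (S \ {P, Q}) := by
    rintro T hT T' hT' heq
    by_contra hTT'
    have hline : IsLine (hyperplane (h T)) :=
      (HasUnitCoord.of_isUnit_dotProduct (by rw [hha T hT]; exact isUnit_one)).isFreeRank_hyperplane
    exact hS.not_collinear _ hline P huS T hT.1 T' hT'.1
      (fun e => hT.2 (Or.inl e.symm)) (fun e => hT'.2 (Or.inl e.symm)) hTT'
      (span_singleton_le_hyperplane.2 (hhu T hT)) (hTh T hT) (heq ▸ hTh T' hT')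
  calc S.ncard
    _ ≤ (S \ {P, Q}).ncard + ({P, Q} : Set _).ncard := Set.ncard_le_ncard_sdiff_add_ncard ..
    _ ≤ {h : Fin 3 → R | h ⬝ᵥ u = 0 ∧ h ⬝ᵥ a = 1}.ncard + 2 :=
      add_le_add (Set.ncard_le_ncard_of_injOn h (fun T hT => ⟨hhu T hT, hha T hT⟩) h_injOn)
        (Set.ncard_pair hne).le
    _ ≤ Nat.card R + 2 := by grw [ncard_dotProduct_eq_zero_one_le hua]

theorem card_le_card_residueField_sq [Finite R] (hπ : maximalIdeal R = Ideal.span {π})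
    (hsq : π ^ 2 = 0) : Nat.card R ≤ Nat.card (ResidueField R) ^ 2 := by
  obtain ⟨lift, hlift⟩ := (residue_surjective (R := R)).hasRightInverse
  have exists_eq_lift_add (x : R) : ∃ y, x = lift (residue R x) + π * y := by
    have hmem : x - lift (residue R x) ∈ maximalIdeal R := by
      rw [← residue_eq_zero_iff, map_sub, hlift, sub_self]
    rw [hπ, Ideal.mem_span_singleton] at hmem
    exact hmem.imp fun y hy => sub_eq_iff_eq_add'.1 hy
  have expansion_surjective : Function.Surjective
      fun a : ResidueField R × ResidueField R => lift a.1 + π * lift a.2 := by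
    intro x
    obtain ⟨y, hy⟩ := exists_eq_lift_add x
    obtain ⟨z, hz⟩ := exists_eq_lift_add y
    refine ⟨(residue R x, residue R y), ?_⟩
    linear_combination -hy - π * hz - z * hsq
  rw [sq, ← Nat.card_prod]
  exact Nat.card_le_card_of_surjective _ expansion_surjective

theorem IsTwoArc.ncard_le [Finite R] (hπ : maximalIdeal R = Ideal.span {π}) (hsq : π ^ 2 = 0)
    {S : Set (Submodule R (Fin 3 → R))} (hS : IsTwoArc S) :
    S.ncard ≤ Nat.card (ResidueField R) ^ 2 + Nat.card (ResidueField R) + 1 := by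
  by_contra! hlt
  obtain ⟨u, w, hu, hw, huS, hwS, hne, huw⟩ := exists_isNeighbour_of_lt_ncard hS.isPoint hlt
  have := hS.ncard_le_card_add_two hπ hsq hu hw huS hwS hne huw
  have := card_le_card_residueField_sq hπ hsq
  have : 0 < Nat.card (ResidueField R) := Nat.card_pos
  lia

end LocalRing

section ZModFour

instance : IsLocalRing R4 :=
  have : Nontrivial R4 := ⟨0, 1, by decide⟩
  .of_nonunits_add (by simp only [mem_nonunits_iff]; decide)

theorem maximalIdeal_zmod_four : maximalIdeal R4 = Ideal.span {2} := by
  ext x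
  rw [Ideal.mem_span_singleton, mem_maximalIdeal, mem_nonunits_iff]
  revert x
  decide

theorem card_residueField_zmod_four : Nat.card (ResidueField R4) = 2 := by
  have hsurj : Function.Surjective (ZMod.castHom (by decide : 2 ∣ 4) (ZMod 2)) :=
    ZMod.castHom_surjective _
  have e : ResidueField R4 ≃+* ZMod 2 :=
    (Ideal.quotEquivOfEq (ker_eq_maximalIdeal _ hsurj).symm).trans
      (RingHom.quotientKerEquivOfSurjective hsurj)
  rw [Nat.card_congr e.toEquiv, Nat.card_zmod]

/-- The powers `1, ξ, …, ξ⁶` of a root `ξ` of `x³ + 2x² + x + 3`, in the basis `1, ξ, ξ²` of the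
Galois ring `(ℤ/4ℤ)[ξ]`. As `ξ` has order 7, these are its nonzero Teichmüller elements. -/
def teichmuller : Fin 7 → Fin 3 → R4 :=
  ![![1, 0, 0], ![0, 1, 0], ![0, 0, 1], ![1, 3, 2], ![2, 3, 3], ![3, 3, 1], ![1, 2, 1]]

theorem isTwoArc_teichmuller :
    IsTwoArc (Set.range fun i => Submodule.span R4 {teichmuller i}) := by
  have hunit : ∀ i, ∃ j, IsUnit (teichmuller i j) := by decide
  exact isTwoArc_range_span hunit (by decide +kernel)

theorem span_teichmuller_injective :
    Function.Injective fun i => Submodule.span R4 {teichmuller i} := by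
  have not_proportional : ∀ i j, ∀ c : R4, c • teichmuller i = teichmuller j → i = j := by
    decide +kernel
  intro i j hij
  obtain ⟨c, hc⟩ := Submodule.mem_span_singleton.1
    (hij.ge (Submodule.mem_span_singleton_self (teichmuller j)))
  exact not_proportional i j c hc

theorem IsTwoArc.ncard_le_seven {S : Set (Submodule R4 (Fin 3 → R4))} (hS : IsTwoArc S) :
    S.ncard ≤ 7 := by
  simpa [card_residueField_zmod_four] using hS.ncard_le maximalIdeal_zmod_four rfl

end ZModFour

/-- The maximum size of a 2-arc in PHG(2, ℤ/4ℤ) is 7: there is a set of 7 points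
with at most 2 on each line, but every set of 8 points contains 3 points on a
common line. -/
theorem max_two_arc_Z4 :
    (∃ A : Set (Submodule R4 (Fin 3 → R4)), (∀ P ∈ A, IsPoint P) ∧ A.ncard = 7 ∧
      ∀ L : Submodule R4 (Fin 3 → R4), IsLine L → {P ∈ A | P ≤ L}.ncard ≤ 2) ∧
    (∀ S : Set (Submodule R4 (Fin 3 → R4)), (∀ P ∈ S, IsPoint P) → S.ncard = 8 →
      ∃ L P Q T, IsLine L ∧ P ∈ S ∧ Q ∈ S ∧ T ∈ S ∧ P ≠ Q ∧ P ≠ T ∧ Q ≠ T ∧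
        P ≤ L ∧ Q ≤ L ∧ T ≤ L) := by
  refine ⟨⟨_, isTwoArc_teichmuller.isPoint, ?_, fun L hL =>
    isTwoArc_teichmuller.ncard_sep_le_two (Set.toFinite _) hL⟩, fun S hS hcard => ?_⟩
  · rw [← Set.image_univ, Set.ncard_image_of_injective _ span_teichmuller_injective,
      Set.ncard_univ, Nat.card_fin]
  · by_contra! hcollinear
    have hS_arc : IsTwoArc S := ⟨hS, fun L hL P hP Q hQ T hT hPQ hPT hQT hPL hQL =>
      hcollinear L P Q T hL hP hQ hT hPQ hPT hQT hPL hQL⟩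
    exact absurd hS_arc.ncard_le_seven (by rw [hcard]; decide)
end

section
/- The maximum size of a 2-arc in the projective Hjelmslev plane over S = 𝔽₄[X]/(X²) is 18: there exists a set of 18 points of PHG(2,S) with at most 2 points on each line, but every multiset of 19 points of PHG(2,S) has a line containing at least 3 of its points counted with multiplicity. -/
/-- The chain ring S = 𝔽₄[X]/(X²), the dual numbers over the field with 4 elements. -/
abbrev S4 := DualNumber (GaloisField 2 2)

attribute [local instance] Classical.propDecidable

/-!
Upper bound. In a 2-arc containing two neighbouring points, the other points have distinct slopes
with respect to two lines through one of them, so the arc has at most `q² + 2 = 18` points. Hence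
the 19 points `p + ε w` of a larger arc have distinct residues, which miss only two points of
`PG(2, 4)`. For a line `m`, consider the symmetric bilinear form `∑ ⟨m, w⟩ p ⊗ p`, summed over the
residues `p` on `m`. By Lagrange interpolation the arc property makes this form nonzero at suitable
pairs of vectors. On the other hand, adjoin to the residues the two missing points and a third
point forming a basis with them: these can be given infinitesimal parts for which the form of every
line `m` becomes alternating. Its values at `(a, b)` are then `det (m, a, b)` times a sesquilinear
form in `m` relative to `𝔽₄/𝔽₂`. By Chevalley-Warning the latter has an isotropic vector `m ≠ 0`,
and at a pair of vectors where the adjoined points do not contribute this is a contradiction.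

Lower bound. The arc is `p + ε W p`, with `W` of degree 4, over the affine residues `p` and two
residues at infinity. If `n` is the line joining the residues of three collinear points, then
`n₀³ = c n₁³`; as nonzero cubes in `𝔽₄` are 1 and `c ≠ 0, 1`, that line is the line at infinity.
-/

open Matrix

section Lines

variable {R : Type} [CommRing R]

theorem isFreeRank_ker_dotProduct {n : ℕ} {l : Fin (n + 1) → R} (hl : ∃ i, IsUnit (l i)) :
    IsFreeRank n (LinearMap.ker (dotProductEquiv R (Fin (n + 1)) l)) := by
  obtain ⟨i, u, hu⟩ := hl
  let f := (LinearMap.funLeft R R i.succAbove).comp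
    (LinearMap.ker (dotProductEquiv R (Fin (n + 1)) l)).subtype
  have mem_ker (x : Fin (n + 1) → R) : x ∈ LinearMap.ker (dotProductEquiv R _ l) ↔
      u * x i + ∑ j, l (i.succAbove j) * x (i.succAbove j) = 0 := by
    rw [LinearMap.mem_ker, dotProductEquiv_apply_apply, dotProduct, Fin.sum_univ_succAbove _ i, hu]
  refine ⟨(LinearEquiv.ofBijective f ⟨?_, fun y ↦ ?_⟩).symm⟩
  · rw [← LinearMap.ker_eq_bot, LinearMap.ker_eq_bot']
    rintro ⟨x, hx⟩ hfx
    have hx' (j) : x (i.succAbove j) = 0 := congrFun hfx j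
    have hxi : x i = 0 := by simpa [hx'] using (mem_ker x).1 hx
    ext j
    obtain rfl | ⟨j, rfl⟩ := i.eq_self_or_eq_succAbove j
    · exact hxi
    · exact hx' j
  · let x : Fin (n + 1) → R := i.insertNth (-(↑u⁻¹ * ∑ j, l (i.succAbove j) * y j)) y
    refine ⟨⟨x, (mem_ker x).2 ?_⟩, funext fun j ↦ ?_⟩
    · simp [x]
    · simp [f, x, LinearMap.funLeft_apply]

theorem IsLine.dotProduct_crossProduct_eq_zero {L : Submodule R (Fin 3 → R)} (hL : IsLine L)
    {x y z : Fin 3 → R} (hx : x ∈ L) (hy : y ∈ L) (hz : z ∈ L) : x ⬝ᵥ y ⨯₃ z = 0 := by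
  obtain ⟨e⟩ := hL
  have exists_coords {x : Fin 3 → R} (hx : x ∈ L) :
      ∃ r s : R, x = r • (e (Pi.single 0 1) : Fin 3 → R) + s • (e (Pi.single 1 1) : Fin 3 → R) := by
    obtain ⟨c, hc⟩ := e.surjective ⟨x, hx⟩
    refine ⟨c 0, c 1, ?_⟩
    have : c = c 0 • Pi.single 0 1 + c 1 • Pi.single 1 1 := by
      ext j; fin_cases j <;> simp
    rw [this, map_add, map_smul, map_smul] at hc
    exact (congrArg Subtype.val hc).symm
  obtain ⟨r, s, rfl⟩ := exists_coords hx
  obtain ⟨r', s', rfl⟩ := exists_coords hy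
  obtain ⟨r'', s'', rfl⟩ := exists_coords hz
  simp only [cross_apply, vec3_dotProduct, Pi.add_apply, Pi.smul_apply, smul_eq_mul, cons_val]
  ring

theorem exists_set_isPoint_of_dotProduct_crossProduct_ne_zero {ι : Type} [Fintype ι]
    (hι : 2 < Fintype.card ι) {v : ι → Fin 3 → R} (hunit : ∀ s, ∃ i, IsUnit (v s i))
    (hv : ∀ s t u, s ≠ t → s ≠ u → t ≠ u → v s ⬝ᵥ v t ⨯₃ v u ≠ 0) :
    ∃ A : Set (Submodule R (Fin 3 → R)), (∀ P ∈ A, IsPoint P) ∧ A.ncard = Fintype.card ι ∧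
      ∀ L, IsLine L → {P ∈ A | P ≤ L}.ncard ≤ 2 := by
  let P (s : ι) := Submodule.span R {v s}
  have P_injective : P.Injective := fun s t hst ↦ by
    by_contra hne
    obtain ⟨u, hus, hut⟩ := ENat.exists_ne_ne_of_three_le
      (by rw [ENat.card_eq_coe_fintype_card]; exact_mod_cast hι) s t
    obtain ⟨r, hr⟩ := Submodule.mem_span_singleton.1
      (show v s ∈ P t from hst ▸ Submodule.mem_span_singleton_self _)
    refine hv s t u hne hus.symm hut.symm ?_
    rw [← hr, smul_dotProduct, dot_self_cross, smul_zero]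
  refine ⟨Set.range P, ?_, ?_, fun L hL ↦ ?_⟩
  · rintro _ ⟨s, rfl⟩
    exact ⟨v s, hunit s, rfl⟩
  · rw [← Set.image_univ, Set.ncard_image_of_injective _ P_injective, Set.ncard_univ,
      Nat.card_eq_fintype_card]
  by_contra! hlt
  obtain ⟨_, ⟨⟨s, rfl⟩, hs⟩, _, ⟨⟨t, rfl⟩, ht⟩, _, ⟨⟨u, rfl⟩, hu⟩, hst, hsu, htu⟩ :=
    (Set.two_lt_ncard ((Set.finite_range P).subset (Set.sep_subset _ _))).1 hlt
  simp only [P, Submodule.span_singleton_le_iff_mem] at hs ht hu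
  exact hv s t u (ne_of_apply_ne _ hst) (ne_of_apply_ne _ hsu) (ne_of_apply_ne _ htu)
    (hL.dotProduct_crossProduct_eq_zero hs ht hu)

end Lines

section TripleProducts

variable {R : Type} [CommRing R]

theorem dotProduct_crossProduct_smul (m a b x : Fin 3 → R) :
    (m ⬝ᵥ a ⨯₃ b) • x = (m ⬝ᵥ x) • a ⨯₃ b + (a ⬝ᵥ x) • b ⨯₃ m + (b ⬝ᵥ x) • m ⨯₃ a := by
  simp only [cross_apply, vec3_dotProduct, funext_iff, Fin.forall_fin_succ, Fin.succ_zero_eq_one,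
    Fin.succ_one_eq_two, Pi.add_apply, Pi.smul_apply, smul_eq_mul, cons_val]
  refine ⟨?_, ?_, ?_, nofun⟩ <;> ring

theorem dotProduct_crossProduct_mul (a b c x y z : Fin 3 → R) :
    (a ⬝ᵥ b ⨯₃ c) * (x ⬝ᵥ y ⨯₃ z) =
      (x ⬝ᵥ a) * ((y ⬝ᵥ b) * (z ⬝ᵥ c) - (z ⬝ᵥ b) * (y ⬝ᵥ c)) -
      (y ⬝ᵥ a) * ((x ⬝ᵥ b) * (z ⬝ᵥ c) - (z ⬝ᵥ b) * (x ⬝ᵥ c)) +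
      (z ⬝ᵥ a) * ((x ⬝ᵥ b) * (y ⬝ᵥ c) - (y ⬝ᵥ b) * (x ⬝ᵥ c)) := by
  simp only [cross_apply, vec3_dotProduct, cons_val]
  ring

variable {K : Type} [Field K]

theorem eq_of_dotProduct_eq {m a b : Fin 3 → K} (h : m ⬝ᵥ a ⨯₃ b ≠ 0) {x y : Fin 3 → K}
    (hm : m ⬝ᵥ x = m ⬝ᵥ y) (ha : a ⬝ᵥ x = a ⬝ᵥ y) (hb : b ⬝ᵥ x = b ⬝ᵥ y) : x = y := by
  refine smul_right_injective _ h ?_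
  simp only [dotProduct_crossProduct_smul, hm, ha, hb]

theorem exists_dotProduct_eq {m a b : Fin 3 → K} (h : m ⬝ᵥ a ⨯₃ b ≠ 0) (α β γ : K) :
    ∃ x, m ⬝ᵥ x = α ∧ a ⬝ᵥ x = β ∧ b ⬝ᵥ x = γ := by
  refine ⟨(m ⬝ᵥ a ⨯₃ b)⁻¹ • (α • a ⨯₃ b + β • b ⨯₃ m + γ • m ⨯₃ a), ?_, ?_, ?_⟩ <;>
    simp only [dotProduct_smul, dotProduct_add, smul_eq_mul, dot_self_cross, dot_cross_self,
      mul_zero, add_zero, zero_add]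
  · field_simp
  · rw [← triple_product_permutation m a b]
    field_simp
  · rw [triple_product_permutation b m a]
    field_simp

theorem exists_ne_dotProduct_crossProduct_ne_zero {N e : Fin 3 → Fin 3 → K}
    (hN : N 0 ⬝ᵥ N 1 ⨯₃ N 2 ≠ 0) (hNe : ∀ k j, N j ⬝ᵥ e k = if k = j then 1 else 0)
    {m : Fin 3 → K} (hm : m ≠ 0) : ∃ i j, i ≠ j ∧ m ⬝ᵥ e i ⨯₃ e j ≠ 0 := by
  by_contra! h0
  refine hm (eq_of_dotProduct_eq hN ?_ ?_ ?_) <;> rw [dotProduct_zero]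
  · simpa [h0, hNe] using (dotProduct_crossProduct_mul m (e 1) (e 2) (N 0) (N 1) (N 2)).symm
  · simpa [h0, hNe] using (dotProduct_crossProduct_mul m (e 2) (e 0) (N 0) (N 1) (N 2)).symm
  · simpa [h0, hNe] using (dotProduct_crossProduct_mul m (e 0) (e 1) (N 0) (N 1) (N 2)).symm

theorem exists_eq_smul_add_smul {p q r : Fin 3 → K} (hpq : p ⨯₃ q ≠ 0) (h : p ⬝ᵥ q ⨯₃ r = 0) :
    ∃ x y : K, r = x • p + y • q := by
  obtain ⟨m, hm⟩ : ∃ m, p ⨯₃ q ⬝ᵥ m ≠ 0 := by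
    by_contra! hm
    exact hpq (dotProduct_eq_zero _ hm)
  refine ⟨(r ⨯₃ q ⬝ᵥ m) / (p ⨯₃ q ⬝ᵥ m), (p ⨯₃ r ⬝ᵥ m) / (p ⨯₃ q ⬝ᵥ m), ?_⟩
  refine smul_right_injective _ hm (Eq.symm ?_)
  simp only [smul_add, smul_smul, mul_div_cancel₀ _ hm]
  simp only [cross_apply, vec3_dotProduct, cons_val] at h ⊢
  simp only [funext_iff, Fin.forall_fin_succ, Fin.succ_zero_eq_one, Fin.succ_one_eq_two,
    Pi.add_apply, Pi.smul_apply, smul_eq_mul]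
  refine ⟨?_, ?_, ?_, nofun⟩
  · linear_combination -m 0 * h
  · linear_combination -m 1 * h
  · linear_combination -m 2 * h

end TripleProducts

section DualVectors

variable {K : Type} [Field K]

theorem dualNumber_isUnit_iff {x : DualNumber K} : IsUnit x ↔ x.fst ≠ 0 := by
  rw [TrivSqZeroExt.isUnit_iff_isUnit_fst, isUnit_iff_ne_zero]

/-- The vector `p + ε w` with residue `p` and infinitesimal part `w`. -/
def dualVec (p w : Fin 3 → K) (i : Fin 3) : DualNumber K := .inl (p i) + .inr (w i)

theorem dualVec_dotProduct (p w : Fin 3 → K) (x : Fin 3 → DualNumber K) :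
    dualVec p w ⬝ᵥ x = .inl (p ⬝ᵥ fun i ↦ (x i).fst) +
      .inr ((p ⬝ᵥ fun i ↦ (x i).snd) + w ⬝ᵥ fun i ↦ (x i).fst) := by
  simp only [dualVec, vec3_dotProduct]
  ext
  · simp
  · simp only [TrivSqZeroExt.fst_add, TrivSqZeroExt.snd_add, DualNumber.snd_mul,
      TrivSqZeroExt.fst_inl, TrivSqZeroExt.snd_inl, TrivSqZeroExt.fst_inr, TrivSqZeroExt.snd_inr]
    ring

theorem dualVec_dotProduct_crossProduct (p q r u v w : Fin 3 → K) :
    dualVec p u ⬝ᵥ dualVec q v ⨯₃ dualVec r w =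
      .inl (p ⬝ᵥ q ⨯₃ r) + .inr (u ⬝ᵥ q ⨯₃ r + p ⬝ᵥ v ⨯₃ r + p ⬝ᵥ q ⨯₃ w) := by
  simp only [dualVec, cross_apply, vec3_dotProduct, cons_val]
  ext
  · simp
  · simp only [TrivSqZeroExt.fst_add, TrivSqZeroExt.snd_add, TrivSqZeroExt.fst_sub,
      TrivSqZeroExt.snd_sub, TrivSqZeroExt.fst_mul, DualNumber.snd_mul, TrivSqZeroExt.fst_inl,
      TrivSqZeroExt.snd_inl, TrivSqZeroExt.fst_inr, TrivSqZeroExt.snd_inr]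
    ring

end DualVectors

/-- A family of vectors of `R³` of which no three meet a common hyperplane `l ⬝ᵥ x = 0` with `l`
unimodular. For unimodular vectors this says that the points they span, repetitions included, form
a 2-arc. -/
def IsTwoArc_s16 {R : Type} [CommRing R] {ι : Type} (v : ι → Fin 3 → R) : Prop :=
  ∀ l : Fin 3 → R, (∃ i, IsUnit (l i)) → ∀ s t u, s ≠ t → s ≠ u → t ≠ u →
    ¬ (l ⬝ᵥ v s = 0 ∧ l ⬝ᵥ v t = 0 ∧ l ⬝ᵥ v u = 0)

section Neighbours

variable {K : Type} [Field K]

theorem exists_lines_of_neighbour {x y : Fin 3 → DualNumber K} (hx : ∃ i, IsUnit (x i)) {r : K}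
    (hxy : ∀ i, (y i).fst = r * (x i).fst) :
    ∃ l m : Fin 3 → DualNumber K, l ⬝ᵥ x = 0 ∧ m ⬝ᵥ x = 0 ∧ m ⬝ᵥ y = 0 ∧ (l ⬝ᵥ y).fst = 0 ∧
      (∃ i, IsUnit (m i)) ∧ ∀ β : DualNumber K, ∃ i, IsUnit ((l - β • m) i) := by
  obtain ⟨i, hi⟩ := hx
  let l (j : Fin 3) : Fin 3 → DualNumber K := Pi.single j (x i) - Pi.single i (x j)
  have l_dot (j) (z : Fin 3 → DualNumber K) : l j ⬝ᵥ z = x i * z j - x j * z i := by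
    simp only [l, sub_dotProduct, single_dotProduct]
  obtain ⟨j, k, hji, hki, hjk, c, hc⟩ : ∃ j k, j ≠ i ∧ k ≠ i ∧ j ≠ k ∧
      ∃ c, (l j ⬝ᵥ y) * c = l k ⬝ᵥ y := by
    have h01 : i.succAbove 0 ≠ i.succAbove 1 := i.succAbove_right_injective.ne zero_ne_one
    obtain ⟨c, hc | hc⟩ := DualNumber.exists_mul_left_or_mul_right
      (l (i.succAbove 0) ⬝ᵥ y) (l (i.succAbove 1) ⬝ᵥ y)
    · exact ⟨_, _, i.succAbove_ne 0, i.succAbove_ne 1, h01, c, hc⟩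
    · exact ⟨_, _, i.succAbove_ne 1, i.succAbove_ne 0, h01.symm, c, hc⟩
  have l_dot_x (j) : l j ⬝ᵥ x = 0 := by rw [l_dot, mul_comm, sub_self]
  refine ⟨l j, l k - c • l j, l_dot_x j, ?_, ?_, ?_, ⟨k, ?_⟩, fun β ↦ ?_⟩
  · rw [sub_dotProduct, smul_dotProduct, l_dot_x, l_dot_x, smul_zero, sub_zero]
  · rw [sub_dotProduct, smul_dotProduct, smul_eq_mul, ← hc, mul_comm, sub_self]
  · rw [l_dot, TrivSqZeroExt.fst_sub, TrivSqZeroExt.fst_mul, TrivSqZeroExt.fst_mul, hxy, hxy]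
    ring
  · simpa [l, hki, hjk.symm] using hi
  · rw [dualNumber_isUnit_iff] at hi
    simp only [dualNumber_isUnit_iff]
    by_cases hβ : β.fst = 0
    · exact ⟨j, by simpa [l, hji, hjk, hβ] using hi⟩
    · exact ⟨k, by simpa [l, hki, hjk.symm, hβ] using hi⟩

theorem IsTwoArc_s16.exists_sub_smul_dotProduct_eq_zero {ι : Type} {v : ι → Fin 3 → DualNumber K}
    (hv : IsTwoArc_s16 v) {s t u : ι} (hst : s ≠ t) (hsu : s ≠ u) (htu : t ≠ u)
    {l m : Fin 3 → DualNumber K} (hls : l ⬝ᵥ v s = 0) (hms : m ⬝ᵥ v s = 0) (hmt : m ⬝ᵥ v t = 0)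
    (hlt : (l ⬝ᵥ v t).fst = 0) (hm : ∃ i, IsUnit (m i)) :
    ∃ β : DualNumber K, (l - β • m) ⬝ᵥ v u = 0 := by
  by_contra! hβ
  obtain ⟨c, hc | hc⟩ := DualNumber.exists_mul_left_or_mul_right (m ⬝ᵥ v u) (l ⬝ᵥ v u)
  · exact hβ c (by rw [sub_dotProduct, smul_dotProduct, smul_eq_mul, mul_comm, hc, sub_self])
  have hc0 : c.fst = 0 := by
    by_contra hne
    obtain ⟨c, rfl⟩ := dualNumber_isUnit_iff.2 hne
    refine hβ ↑c⁻¹ ?_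
    rw [sub_dotProduct, smul_dotProduct, smul_eq_mul, ← hc, mul_comm, mul_assoc, c.mul_inv,
      mul_one, sub_self]
  refine hv (m - c • l) ?_ s t u hst hsu htu ⟨?_, ?_, ?_⟩
  · obtain ⟨i, hi⟩ := hm
    rw [dualNumber_isUnit_iff] at hi
    exact ⟨i, dualNumber_isUnit_iff.2 (by simpa [hc0] using hi)⟩
  · rw [sub_dotProduct, smul_dotProduct, hls, hms, smul_zero, sub_zero]
  · rw [sub_dotProduct, smul_dotProduct, hmt]
    ext <;> simp [hc0, hlt]
  · rw [sub_dotProduct, smul_dotProduct, smul_eq_mul, ← hc, mul_comm, sub_self]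

theorem IsTwoArc_s16.card_le_of_neighbours [Fintype K] {ι : Type} [Fintype ι]
    {v : ι → Fin 3 → DualNumber K} (hv : IsTwoArc_s16 v) {s t : ι} (hst : s ≠ t)
    (hs : ∃ i, IsUnit (v s i)) {r : K} (hr : ∀ i, (v t i).fst = r * (v s i).fst) :
    Fintype.card ι ≤ Fintype.card K ^ 2 + 2 := by
  obtain ⟨l, m, hls, hms, hmt, hlt, hm, hlm⟩ := exists_lines_of_neighbour hs hr
  have exists_slope (u : ι) (hus : u ≠ s) (hut : u ≠ t) :=
    hv.exists_sub_smul_dotProduct_eq_zero hst hus.symm hut.symm hls hms hmt hlt hm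
  choose! slope hslope using exists_slope
  have slope_injOn : Set.InjOn slope (Finset.univ \ {s, t} : Finset ι) := by
    intro u hu u' hu' h
    simp only [Finset.coe_sdiff, Finset.coe_insert, Finset.coe_singleton, Set.mem_sdiff,
      Set.mem_insert_iff, Set.mem_singleton_iff, not_or] at hu hu'
    by_contra hne
    refine hv _ (hlm (slope u)) s u u' (Ne.symm hu.2.1) (Ne.symm hu'.2.1) hne ⟨?_, ?_, ?_⟩
    · rw [sub_dotProduct, smul_dotProduct, hls, hms, smul_zero, sub_zero]
    · exact hslope u hu.2.1 hu.2.2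
    · exact h ▸ hslope u' hu'.2.1 hu'.2.2
  have hcard := Finset.card_le_card_of_injOn (fun u ↦ ((slope u).fst, (slope u).snd))
    (t := Finset.univ) (by simp) fun u hu u' hu' h ↦
      slope_injOn hu hu' (TrivSqZeroExt.ext (Prod.ext_iff.1 h).1 (Prod.ext_iff.1 h).2)
  rw [Finset.card_univ_sdiff, Finset.card_pair hst, Finset.card_univ, Fintype.card_prod, ← sq]
    at hcard
  exact Nat.sub_le_iff_le_add.1 hcard

end Neighbours

section PowerSums

variable {K : Type} [Field K] [Fintype K]

theorem charP_two_of_card_eq_four (hK : Fintype.card K = 4) : CharP K 2 := by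
  have h : (2 : K) * 2 = 0 := by
    have := FiniteField.cast_card_eq_zero K
    rw [hK] at this
    linear_combination this
  exact CharTwo.of_one_ne_zero_of_two_eq_zero one_ne_zero (mul_self_eq_zero.1 h)

theorem pow_three_eq_one_of_card_eq_four (hK : Fintype.card K = 4) {x : K} (hx : x ≠ 0) :
    x ^ 3 = 1 := by
  simpa [hK] using FiniteField.pow_card_sub_one_eq_one x hx

theorem pow_four_eq_self_of_card_eq_four (hK : Fintype.card K = 4) (x : K) : x ^ 4 = x :=
  hK ▸ FiniteField.pow_card x

theorem sum_quintic_eq_coeff (hK : Fintype.card K = 4) (c₀ c₁ c₂ c₃ c₄ c₅ : K) :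
    ∑ t : K, (c₀ + c₁ * t + c₂ * t ^ 2 + c₃ * t ^ 3 + c₄ * t ^ 4 + c₅ * t ^ 5) = c₃ := by
  have := charP_two_of_card_eq_four hK
  have sum_pow (i : ℕ) (hi : i < 3) : ∑ t : K, t ^ i = 0 :=
    FiniteField.sum_pow_lt_card_sub_one K i (by rwa [hK])
  have sum_pow_three : ∑ t : K, t ^ 3 = 1 := by
    have cube (t : K) : t ^ 3 = 1 + if t = 0 then 1 else 0 := by
      split_ifs with ht
      · simp [ht, CharTwo.add_self_eq_zero]
      · rw [pow_three_eq_one_of_card_eq_four hK ht, add_zero]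
    simp [cube, Finset.sum_add_distrib]
  have reduce (t : K) : c₀ + c₁ * t + c₂ * t ^ 2 + c₃ * t ^ 3 + c₄ * t ^ 4 + c₅ * t ^ 5 =
      c₀ * t ^ 0 + (c₁ + c₄) * t ^ 1 + (c₂ + c₅) * t ^ 2 + c₃ * t ^ 3 := by
    linear_combination (c₄ + c₅ * t) * pow_four_eq_self_of_card_eq_four hK t
  simp only [reduce, Finset.sum_add_distrib, ← Finset.mul_sum, sum_pow_three,
    sum_pow 0 three_pos, sum_pow 1 (by norm_num), sum_pow 2 (by norm_num)]
  ring

end PowerSums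

section SesquilinearForms

open MvPolynomial

variable {K ι : Type} [Field K] [Fintype K] [Fintype ι]

theorem exists_ne_zero_eval_eq_zero {f : MvPolynomial ι K}
    (hdeg : f.totalDegree < (Fintype.card K - 1) * Fintype.card ι) (h₀ : eval 0 f = 0)
    (h₁ : ∀ x, eval x f = 0 ∨ eval x f = 1) : ∃ x, x ≠ 0 ∧ eval x f = 0 := by
  by_contra! h
  have : Nonempty ι :=
    Fintype.card_pos_iff.1 (pos_of_mul_pos_right (pos_of_gt hdeg) (Nat.zero_le _))
  have eval_eq (x : ι → K) : eval x f = 1 - if x = 0 then 1 else 0 := by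
    split_ifs with hx
    · rw [hx, h₀, sub_self]
    · rw [(h₁ x).resolve_left (h x hx), sub_zero]
  have sum_eq_zero := sum_eval_eq_zero f hdeg
  simp [eval_eq, Finset.sum_sub_distrib] at sum_eq_zero

theorem exists_ne_zero_sum_mul_pow_eq_zero {p n : ℕ} [Fact p.Prime] [CharP K p]
    (hK : Fintype.card K = (p ^ n) ^ 2) (hι : 2 < Fintype.card ι) (B : ι → ι → K) :
    ∃ x : ι → K, x ≠ 0 ∧ ∑ i, ∑ j, B i j * x i * x j ^ p ^ n = 0 := by
  set q := p ^ n with hq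
  let h (x : ι → K) : K := ∑ i, ∑ j, B i j * x i * x j ^ q
  let form (A : ι → ι → K) (r s : ℕ) : MvPolynomial ι K := ∑ i, ∑ j, C (A i j) * X i ^ r * X j ^ s
  let H := form B 1 q
  let H' := form (fun i j ↦ B i j ^ q) q 1
  have degree_form (A : ι → ι → K) (r s : ℕ) : (form A r s).totalDegree ≤ r + s :=
    totalDegree_finsetSum_le fun i _ ↦ totalDegree_finsetSum_le fun j _ ↦ by
      grw [totalDegree_mul, totalDegree_mul, totalDegree_C, totalDegree_X_pow, totalDegree_X_pow,
        zero_add]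
  have eval_H (x : ι → K) : eval x H = h x := by simp [H, form, h]
  -- As `x ↦ x ^ q` is an involution of `K`, the conjugate of the form has low degree as well.
  have eval_H' (x : ι → K) : eval x H' = h x ^ q := by
    have pow_pow (y : K) : (y ^ q) ^ q = y := by rw [← pow_mul, ← sq, ← hK, FiniteField.pow_card]
    simp only [H', form, h, map_sum, map_mul, map_pow, eval_C, eval_X, hq, sum_pow_char_pow,
      mul_pow, pow_one]
    simp only [← hq, pow_pow]
  have card_sub_one : (q - 1) * (q + 1) = Fintype.card K - 1 := by
    rw [hK, mul_comm, ← Nat.sq_sub_sq, one_pow]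
  have card_sub_one_pos : 0 < Fintype.card K - 1 := Nat.sub_pos_of_lt Fintype.one_lt_card
  have eval_eq (x : ι → K) : eval x ((H * H') ^ (q - 1)) = h x ^ (Fintype.card K - 1) := by
    rw [map_pow, map_mul, eval_H, eval_H', ← pow_succ', ← pow_mul, mul_comm, card_sub_one]
  have degree_lt : ((H * H') ^ (q - 1)).totalDegree < (Fintype.card K - 1) * Fintype.card ι := by
    grw [totalDegree_pow, totalDegree_mul, degree_form, degree_form, add_comm 1, ← two_mul,
      mul_left_comm, card_sub_one, mul_comm]
    exact Nat.mul_lt_mul_of_pos_left hι card_sub_one_pos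
  obtain ⟨x, hx, hx0⟩ := exists_ne_zero_eval_eq_zero degree_lt
    (by rw [eval_eq]; simp [h, card_sub_one_pos.ne'])
    fun x ↦ (eq_or_ne (h x) 0).imp (fun h0 ↦ by simp [eval_eq, h0, card_sub_one_pos.ne'])
      fun h0 ↦ by rw [eval_eq, FiniteField.pow_card_sub_one_eq_one _ h0]
  exact ⟨x, hx, eq_zero_of_pow_eq_zero (eval_eq x ▸ hx0)⟩

end SesquilinearForms

section CharTwoTensors

variable {K : Type} [Field K] [CharP K 2]

theorem sum_dot_mul_dot_eq_zero {ι : Type} [Fintype ι] {g p : ι → Fin 3 → K}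
    (hgp : ∀ s, g s ⬝ᵥ p s = 0) (h : ∀ m a, ∑ s, (m ⨯₃ a ⬝ᵥ g s) * (a ⬝ᵥ p s) = 0)
    (x y : Fin 3 → K) :
    ∑ s, (x ⬝ᵥ g s) * (y ⬝ᵥ p s) = 0 := by
  let κ (i j : Fin 3) : K := ∑ s, g s i * p s j
  have expand (x y : Fin 3 → K) :
      ∑ s, (x ⬝ᵥ g s) * (y ⬝ᵥ p s) = ∑ i, ∑ j, x i * y j * κ i j := by
    simp only [κ, Fin.sum_univ_three, vec3_dotProduct, Finset.mul_sum, ← Finset.sum_add_distrib]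
    exact Finset.sum_congr rfl fun s _ ↦ by ring
  have trace : κ 0 0 + κ 1 1 + κ 2 2 = 0 := by
    simp only [κ, ← Finset.sum_add_distrib, ← vec3_dotProduct, hgp, Finset.sum_const_zero]
  have off_diagonal : κ 0 1 = 0 ∧ κ 0 2 = 0 ∧ κ 1 0 = 0 ∧ κ 1 2 = 0 ∧ κ 2 0 = 0 ∧ κ 2 1 = 0 := by
    have h₀₁ := h ![0, 0, 1] ![0, 1, 0]
    have h₀₂ := h ![0, 1, 0] ![0, 0, 1]
    have h₁₀ := h ![0, 0, 1] ![1, 0, 0]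
    have h₁₂ := h ![1, 0, 0] ![0, 0, 1]
    have h₂₀ := h ![0, 1, 0] ![1, 0, 0]
    have h₂₁ := h ![1, 0, 0] ![0, 1, 0]
    simp only [expand, cross_apply, Fin.sum_univ_three, cons_val, mul_one, mul_zero, sub_zero,
      sub_self, zero_sub, zero_mul, zero_add, add_zero, one_mul, neg_mul, neg_eq_zero]
      at h₀₁ h₀₂ h₁₀ h₁₂ h₂₀ h₂₁
    exact ⟨h₀₁, h₀₂, h₁₀, h₁₂, h₂₀, h₂₁⟩
  have diagonal : κ 1 1 = κ 0 0 ∧ κ 2 2 = κ 0 0 := by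
    have h₁ := h ![0, 0, 1] ![1, 1, 0]
    have h₂ := h ![0, 1, 0] ![1, 0, 1]
    simp only [expand, cross_apply, Fin.sum_univ_three, cons_val, mul_one, mul_zero, sub_zero,
      sub_self, zero_sub, zero_mul, zero_add, add_zero, one_mul, neg_mul, off_diagonal] at h₁ h₂
    constructor <;> grind
  have corner : κ 0 0 = 0 := by
    rw [diagonal.1, diagonal.2, CharTwo.add_self_eq_zero, zero_add] at trace
    exact trace
  simp only [expand, Fin.sum_univ_three, off_diagonal, diagonal, corner, mul_zero, add_zero]

theorem sum_cross_mul_tensor {ψ : Fin 3 → Fin 3 → Fin 3 → K}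
    (symm : ∀ i j k, ψ i j k = ψ i k j) (trace : ∀ k, ∑ i, ψ i i k = 0)
    (h : ∀ m a : Fin 3 → K, ∑ i, ∑ j, ∑ k, (m ⨯₃ a) i * a j * m k * ψ i j k = 0)
    (m a b : Fin 3 → K) :
    ∑ i, ∑ j, ∑ k, (m ⨯₃ a) i * b j * m k * ψ i j k =
      (m ⬝ᵥ a ⨯₃ b) * ∑ k, ψ (k + 1) (k + 1) k * m k := by
  have vanish : (ψ 0 1 2 = 0 ∧ ψ 1 0 2 = 0 ∧ ψ 2 0 1 = 0) ∧ (ψ 0 1 1 = 0 ∧ ψ 0 2 2 = 0) ∧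
      (ψ 1 0 0 = 0 ∧ ψ 1 2 2 = 0) ∧ ψ 2 0 0 = 0 ∧ ψ 2 1 1 = 0 := by
    have h₀ := h ![0, 1, 0] ![0, 0, 1]
    have h₁ := h ![0, 0, 1] ![1, 0, 0]
    have h₂ := h ![1, 0, 0] ![0, 1, 0]
    have h₀₁ := h ![0, 1, 1] ![0, 1, 0]
    have h₀₂ := h ![0, 1, 1] ![0, 0, 1]
    have h₁₀ := h ![1, 0, 1] ![1, 0, 0]
    have h₁₂ := h ![1, 0, 1] ![0, 0, 1]
    have h₂₀ := h ![1, 1, 0] ![1, 0, 0]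
    have h₂₁ := h ![1, 1, 0] ![0, 1, 0]
    simp only [cross_apply, Fin.sum_univ_three, cons_val, mul_one, mul_zero, sub_zero, sub_self,
      zero_sub, zero_mul, zero_add, add_zero, one_mul, neg_mul] at h₀ h₁ h₂ h₀₁ h₀₂ h₁₀ h₁₂ h₂₀ h₂₁
    grind
  have diagonal : ψ 2 0 2 = ψ 1 0 1 ∧ ψ 2 1 2 = ψ 0 0 1 ∧ ψ 1 1 2 = ψ 0 0 2 := by
    have h₀ := h ![1, 0, 0] ![0, 1, 1]
    have h₁ := h ![0, 1, 0] ![1, 0, 1]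
    have h₂ := h ![0, 0, 1] ![1, 1, 0]
    simp only [cross_apply, Fin.sum_univ_three, cons_val, mul_one, mul_zero, sub_zero, sub_self,
      zero_sub, zero_mul, zero_add, add_zero, one_mul, neg_mul] at h₀ h₁ h₂
    grind
  have cube : ψ 0 0 0 = 0 ∧ ψ 1 1 1 = 0 ∧ ψ 2 2 2 = 0 := by
    have h₀ := trace 0
    have h₁ := trace 1
    have h₂ := trace 2
    simp only [Fin.sum_univ_three] at h₀ h₁ h₂
    grind
  simp only [Fin.sum_univ_three, symm _ 1 0, symm _ 2 0, symm _ 2 1, vanish, diagonal, cube,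
    cross_apply, vec3_dotProduct, cons_val, CharTwo.sub_eq_add, Fin.reduceAdd]
  linear_combination (m 1 * a 2 * m 0 * b 2 * ψ 0 0 2 + m 1 * m 2 * b 0 * a 0 * ψ 1 0 1 +
    m 2 * a 1 * m 0 * b 1 * ψ 0 0 1) * CharTwo.two_eq_zero (R := K)

end CharTwoTensors

section LineMoments

variable {K ι : Type} [Field K] [Fintype ι]

/-- For the residues `p s` and the infinitesimal parts `w s` of a family of vectors `p s + ε w s`,
the bilinear moment, evaluated at `a` and `b`, of the points lying over the line `m`; each is
weighted by the value of the line `m` at its infinitesimal part. -/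
noncomputable def lineMoment (p w : ι → Fin 3 → K) (m a b : Fin 3 → K) : K :=
  ∑ s with m ⬝ᵥ p s = 0, (m ⬝ᵥ w s) * (a ⬝ᵥ p s) * (b ⬝ᵥ p s)

theorem lineMoment_self (p w : ι → Fin 3 → K) (m a : Fin 3 → K) :
    lineMoment p w m a a = ∑ s with m ⬝ᵥ p s = 0, (m ⬝ᵥ w s) * (a ⬝ᵥ p s) ^ 2 :=
  Finset.sum_congr rfl fun s _ ↦ by ring

theorem lineMoment_self_sub [CharP K 2] (p w : ι → Fin 3 → K) (m a b : Fin 3 → K) :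
    lineMoment p w m (a - b) (a - b) = lineMoment p w m a a - lineMoment p w m b b := by
  simp only [lineMoment_self, CharTwo.sub_eq_add, add_dotProduct, CharTwo.add_sq, mul_add,
    Finset.sum_add_distrib]

theorem lineMoment_self_sum_smul [CharP K 2] {σ : Type} (p w : ι → Fin 3 → K) (t : Finset σ)
    (c : σ → K) (e : σ → Fin 3 → K) (m : Fin 3 → K) :
    lineMoment p w m (∑ i ∈ t, c i • e i) (∑ i ∈ t, c i • e i) =
      ∑ i ∈ t, c i ^ 2 * lineMoment p w m (e i) (e i) := by
  simp only [lineMoment_self, sum_dotProduct, smul_dotProduct, smul_eq_mul, CharTwo.sum_sq,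
    Finset.mul_sum, mul_pow]
  rw [Finset.sum_comm]
  exact Finset.sum_congr rfl fun i _ ↦ Finset.sum_congr rfl fun s _ ↦ by ring

theorem lineMoment_sumElim {κ : Type} [Fintype κ] (p w : ι → Fin 3 → K)
    (p' w' : κ → Fin 3 → K) (m a b : Fin 3 → K) :
    lineMoment (Sum.elim p p') (Sum.elim w w') m a b =
      lineMoment p w m a b + lineMoment p' w' m a b := by
  simp only [lineMoment, Finset.sum_filter, Fintype.sum_sum_type, Sum.elim_inl, Sum.elim_inr]
  rfl

theorem lineMoment_eq_sum [Fintype K] (hK : Fintype.card K = 4) (p w : ι → Fin 3 → K)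
    (m a b : Fin 3 → K) : lineMoment p w m a b =
      ∑ s, (1 - (m ⬝ᵥ p s) ^ 3) * ((m ⨯₃ a ⬝ᵥ w s ⨯₃ p s) * (b ⬝ᵥ p s)) := by
  rw [lineMoment, Finset.sum_filter]
  refine Finset.sum_congr rfl fun s _ ↦ ?_
  split_ifs with h
  · rw [cross_dot_cross, h]
    ring
  · rw [pow_three_eq_one_of_card_eq_four hK h, sub_self, zero_mul]

end LineMoments

section IsotropicMoments

variable {K ι : Type} [Field K] [Fintype K] [Fintype ι] {p w : ι → Fin 3 → K}

theorem sum_pencil (hK : Fintype.card K = 4) (x y α β c : K) :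
    ∑ t : K, t * ((1 - (x + t * y) ^ 3) * ((α + t * β) * c)) =
      β * c * y * x ^ 2 + α * c * x * y ^ 2 := by
  have := charP_two_of_card_eq_four hK
  rw [← sum_quintic_eq_coeff hK 0 ((1 - x ^ 3) * α * c)
    ((1 - x ^ 3) * β * c - 3 * x ^ 2 * y * α * c) (β * c * y * x ^ 2 + α * c * x * y ^ 2)
    (-3 * x * y ^ 2 * β * c - y ^ 3 * α * c) (-y ^ 3 * β * c)]
  refine Finset.sum_congr rfl fun t _ ↦ ?_
  linear_combination
    (-2 * (β * c * y * x ^ 2 + α * c * x * y ^ 2)) * t ^ 3 * CharTwo.two_eq_zero (R := K)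

theorem sum_cross_dot_mul_sq_eq_zero (hK : Fintype.card K = 4)
    (h : ∀ m a, lineMoment p w m a a = 0) (m a l : Fin 3 → K) :
    ∑ s, (m ⨯₃ a ⬝ᵥ w s ⨯₃ p s) * (a ⬝ᵥ p s) * (m ⬝ᵥ p s) * (l ⬝ᵥ p s) ^ 2 = 0 := by
  have := charP_two_of_card_eq_four hK
  let f (m a l : Fin 3 → K) :=
    ∑ s, (m ⨯₃ a ⬝ᵥ w s ⨯₃ p s) * (a ⬝ᵥ p s) * (m ⬝ᵥ p s) * (l ⬝ᵥ p s) ^ 2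
  have swap₁₂ (m a l) : f m a l = f a m l := by
    refine Finset.sum_congr rfl fun s _ ↦ ?_
    rw [← cross_anticomm, neg_dotProduct, CharTwo.neg_eq]
    ring
  have swap₁₃ (m a l) : f m a l = f l a m := by
    have pencil : ∑ t : K, t * lineMoment p w (l + t • m) a a = f m a l + f l a m := by
      simp only [lineMoment_eq_sum hK, Finset.mul_sum, f]
      rw [Finset.sum_comm, ← Finset.sum_add_distrib]
      simp only [map_add, map_smul, LinearMap.add_apply, LinearMap.smul_apply, add_dotProduct,
        smul_dotProduct, smul_eq_mul, sum_pencil hK]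
    simp only [h, mul_zero, Finset.sum_const_zero] at pencil
    exact CharTwo.add_eq_zero.1 pencil.symm
  have cyclic : f m a l + f a l m + f l m a = 0 := by
    simp only [f, ← Finset.sum_add_distrib]
    refine Finset.sum_eq_zero fun s _ ↦ ?_
    have expand := congrArg (· ⬝ᵥ w s ⨯₃ p s) (dotProduct_crossProduct_smul m a l (p s))
    simp only [add_dotProduct, smul_dotProduct, smul_eq_mul, dot_cross_self, mul_zero] at expand
    linear_combination (-(m ⬝ᵥ p s) * (a ⬝ᵥ p s) * (l ⬝ᵥ p s)) * expand
  rw [swap₁₂ a, swap₁₃ l a, swap₁₃ l m, swap₁₂ a, CharTwo.add_self_eq_zero, zero_add] at cyclic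
  exact cyclic

theorem sum_cross_dot_mul_dot_eq_zero (hK : Fintype.card K = 4)
    (h : ∀ m a, lineMoment p w m a a = 0) (m a : Fin 3 → K) :
    ∑ s, (m ⨯₃ a ⬝ᵥ w s ⨯₃ p s) * (a ⬝ᵥ p s) = 0 := by
  have split := h m a
  simp only [lineMoment_eq_sum hK, sub_mul, one_mul, Finset.sum_sub_distrib] at split
  rw [sub_eq_zero.1 split, ← sum_cross_dot_mul_sq_eq_zero hK h m a m]
  exact Finset.sum_congr rfl fun s _ ↦ by ring

theorem exists_lineMoment_eq_dot_cross_mul (hK : Fintype.card K = 4)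
    (h : ∀ m a, lineMoment p w m a a = 0) :
    ∃ ζ : Fin 3 → Fin 3 → K, ∀ m a b, lineMoment p w m a b =
      (m ⬝ᵥ a ⨯₃ b) * ∑ k, ∑ l, ζ k l * m k * m l ^ 2 := by
  have := charP_two_of_card_eq_four hK
  let g (s : ι) : Fin 3 → K := w s ⨯₃ p s
  let ψ (l i j k : Fin 3) : K := ∑ s, g s i * p s j * p s k * p s l ^ 2
  have expand (m a b l : Fin 3 → K) :
      ∑ s, (m ⨯₃ a ⬝ᵥ g s) * (b ⬝ᵥ p s) * (m ⬝ᵥ p s) * (l ⬝ᵥ p s) ^ 2 =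
        ∑ r, l r ^ 2 * ∑ i, ∑ j, ∑ k, (m ⨯₃ a) i * b j * m k * ψ r i j k := by
    simp only [ψ, Fin.sum_univ_three, vec3_dotProduct, Finset.mul_sum, CharTwo.add_sq,
      ← Finset.sum_add_distrib]
    exact Finset.sum_congr rfl fun s _ ↦ by ring
  have tensor (r : Fin 3) := sum_cross_mul_tensor (ψ := ψ r)
    (fun i j k ↦ Finset.sum_congr rfl fun s _ ↦ by ring)
    (fun k ↦ by
      have : ∑ i, ψ r i i k = ∑ s, (g s ⬝ᵥ p s) * (p s k * p s r ^ 2) := by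
        simp only [ψ, Fin.sum_univ_three, vec3_dotProduct, ← Finset.sum_add_distrib]
        exact Finset.sum_congr rfl fun s _ ↦ by ring
      simp only [this, g, dotProduct_comm _ (p _), dot_cross_self, zero_mul, Finset.sum_const_zero])
    (fun m a ↦ by
      have := sum_cross_dot_mul_sq_eq_zero hK h m a (Pi.single r 1)
      rw [expand] at this
      simpa [Pi.single_apply] using this)
  refine ⟨fun k l ↦ ψ l (k + 1) (k + 1) k, fun m a b ↦ ?_⟩
  have split : lineMoment p w m a b = ∑ s, (m ⨯₃ a ⬝ᵥ g s) * (b ⬝ᵥ p s) -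
      ∑ s, (m ⨯₃ a ⬝ᵥ g s) * (b ⬝ᵥ p s) * (m ⬝ᵥ p s) * (m ⬝ᵥ p s) ^ 2 := by
    rw [lineMoment_eq_sum hK, ← Finset.sum_sub_distrib]
    exact Finset.sum_congr rfl fun s _ ↦ by ring
  rw [split, sum_dot_mul_dot_eq_zero (fun s ↦ by rw [dotProduct_comm, dot_cross_self])
    (sum_cross_dot_mul_dot_eq_zero hK h), expand, zero_sub, CharTwo.neg_eq]
  simp only [tensor]
  simp only [Fin.sum_univ_three]
  ring

theorem exists_ne_zero_lineMoment_eq_zero (hK : Fintype.card K = 4)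
    (h : ∀ m a, lineMoment p w m a a = 0) : ∃ m, m ≠ 0 ∧ ∀ a b, lineMoment p w m a b = 0 := by
  have := charP_two_of_card_eq_four hK
  obtain ⟨ζ, hζ⟩ := exists_lineMoment_eq_dot_cross_mul hK h
  obtain ⟨m, hm, hmζ⟩ := exists_ne_zero_sum_mul_pow_eq_zero (p := 2) (n := 1) hK (by simp) ζ
  exact ⟨m, hm, fun a b ↦ by rw [hζ]; exact mul_eq_zero_of_right _ hmζ⟩

end IsotropicMoments

section NonvanishingMoments

variable {K ι : Type} [Field K] [Fintype K] [Fintype ι] {p w : ι → Fin 3 → K}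

theorem exists_eq_add_mul_of_sum_mul_eq_zero (hK : Fintype.card K = 4) {f : Kˣ → K}
    (hf : ∑ u : Kˣ, u * f u = 0) : ∃ α β : K, ∀ t : Kˣ, f t = α + t * β := by
  have := charP_two_of_card_eq_four hK
  have cube (t : Kˣ) : (t : K) ^ 3 = 1 := pow_three_eq_one_of_card_eq_four hK t.ne_zero
  -- Lagrange interpolation: the geometric sum `1 + x + x ^ 2` at `x = t * u ^ 2 = t / u`.
  have kernel (t u : Kˣ) : 1 + t * (u : K) ^ 2 + t ^ 2 * u = if t = u then 1 else 0 := by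
    split_ifs with h
    · subst h
      linear_combination 2 * cube t + CharTwo.two_eq_zero (R := K)
    · have hne : (t : K) - u ≠ 0 := sub_ne_zero.2 (Units.val_injective.ne h)
      refine (mul_eq_zero_iff_left hne).1 ?_
      linear_combination (u : K) * cube t - t * cube u
  refine ⟨∑ u, f u, ∑ u : Kˣ, u ^ 2 * f u, fun t ↦ ?_⟩
  calc f t = ∑ u : Kˣ, (1 + t * (u : K) ^ 2 + t ^ 2 * u) * f u := by simp [kernel]
    _ = ∑ u, f u + t * ∑ u : Kˣ, u ^ 2 * f u + t ^ 2 * ∑ u : Kˣ, u * f u := by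
      simp only [Finset.mul_sum, ← Finset.sum_add_distrib]
      exact Finset.sum_congr rfl fun u _ ↦ by ring
    _ = ∑ u, f u + t * ∑ u : Kˣ, u ^ 2 * f u := by rw [hf, mul_zero, add_zero]

theorem exists_lineMoment_eq_sum_units (hK : Fintype.card K = 4)
    (hp : ∀ s t, ∀ r : K, p t = r • p s → s = t) {m a b : Fin 3 → K} (hmab : m ⬝ᵥ a ⨯₃ b ≠ 0)
    (hcov : ∀ x, m ⬝ᵥ x = 0 → a ⬝ᵥ x ≠ 0 → b ⬝ᵥ x ≠ 0 → ∃ s, ∃ c : K, c • p s = x) :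
    ∃ (σ : Kˣ → ι) (c : Kˣ → K), σ.Injective ∧
      (∀ t, m ⬝ᵥ p (σ t) = 0 ∧ c t * (a ⬝ᵥ p (σ t)) = 1 ∧ c t * (b ⬝ᵥ p (σ t)) = t) ∧
      lineMoment p w m a b = ∑ t : Kˣ, t * (c t * (m ⬝ᵥ w (σ t))) := by
  choose x hmx hax hbx using fun t : Kˣ ↦ exists_dotProduct_eq hmab 0 1 t
  choose σ c hσ using fun t : Kˣ ↦ hcov (x t) (hmx t) (by simp [hax]) (by simp [hbx])
  have dot_x (l : Fin 3 → K) (t) : l ⬝ᵥ x t = c t * (l ⬝ᵥ p (σ t)) := by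
    rw [← hσ, dotProduct_smul, smul_eq_mul]
  have hca (t) : c t * (a ⬝ᵥ p (σ t)) = 1 := by rw [← dot_x, hax]
  have hcb (t) : c t * (b ⬝ᵥ p (σ t)) = t := by rw [← dot_x, hbx]
  have hc (t) : c t ≠ 0 := left_ne_zero_of_mul_eq_one (hca t)
  have hmσ (t) : m ⬝ᵥ p (σ t) = 0 := (mul_eq_zero_iff_left (hc t)).1 (by rw [← dot_x, hmx])
  have hσ_inj : σ.Injective := fun t u h ↦ by
    have hctu : c t = c u := mul_right_cancel₀ (right_ne_zero_of_mul_eq_one (hca u))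
      (by rw [hca u, ← h, hca t])
    exact Units.val_injective (by rw [← hcb t, ← hcb u, h, hctu])
  refine ⟨σ, c, hσ_inj, fun t ↦ ⟨hmσ t, hca t, hcb t⟩, ?_⟩
  refine (Finset.sum_of_injOn σ hσ_inj.injOn (by simp [Set.MapsTo, hmσ]) ?_ fun t _ ↦ ?_).symm
  · intro s hs hsσ
    have hms : m ⬝ᵥ p s = 0 := (Finset.mem_filter.1 hs).2
    by_contra! hne
    have ha : a ⬝ᵥ p s ≠ 0 := fun h ↦ hne (by rw [h, mul_zero, zero_mul])
    have hb : b ⬝ᵥ p s ≠ 0 := right_ne_zero_of_mul hne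
    let t : Kˣ := Units.mk0 _ (div_ne_zero hb ha)
    have hps : p s = (a ⬝ᵥ p s) • x t := by
      refine eq_of_dotProduct_eq hmab ?_ ?_ ?_
      · rw [dotProduct_smul, hmx, hms, smul_zero]
      · rw [dotProduct_smul, hax, smul_eq_mul, mul_one]
      · rw [dotProduct_smul, hbx, smul_eq_mul, Units.val_mk0, mul_div_cancel₀ _ ha]
    rw [← hσ, smul_smul] at hps
    exact hsσ ⟨t, Finset.mem_coe.2 (Finset.mem_univ t), hp _ _ _ hps⟩
  · have hc3 : c t ^ 3 = 1 := pow_three_eq_one_of_card_eq_four hK (hc t)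
    rw [← hcb t]
    linear_combination (m ⬝ᵥ w (σ t)) * (b ⬝ᵥ p (σ t)) *
      ((a ⬝ᵥ p (σ t)) * hc3 - c t ^ 2 * hca t)

theorem lineMoment_ne_zero (hK : Fintype.card K = 4)
    (hp : ∀ s t, ∀ r : K, p t = r • p s → s = t) {m a b : Fin 3 → K} (hmab : m ⬝ᵥ a ⨯₃ b ≠ 0)
    (hcov : ∀ x, m ⬝ᵥ x = 0 → a ⬝ᵥ x ≠ 0 → b ⬝ᵥ x ≠ 0 → ∃ s, ∃ c : K, c • p s = x)
    (harc : ∀ n s t u, s ≠ t → s ≠ u → t ≠ u →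
      ¬ ∀ i ∈ ({s, t, u} : Set ι), m ⬝ᵥ p i = 0 ∧ m ⬝ᵥ w i + n ⬝ᵥ p i = 0) :
    lineMoment p w m a b ≠ 0 := by
  intro h0
  obtain ⟨σ, c, hσ, hdot, hsum⟩ := exists_lineMoment_eq_sum_units hK hp hmab hcov (w := w)
  obtain ⟨α, β, hαβ⟩ := exists_eq_add_mul_of_sum_mul_eq_zero hK (hsum ▸ h0)
  obtain ⟨t, u, v, htu, htv, huv⟩ := Fintype.two_lt_card_iff.1
    (show 2 < Fintype.card Kˣ by rw [Fintype.card_units, hK]; norm_num)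
  have on_line (t) : m ⬝ᵥ p (σ t) = 0 ∧ m ⬝ᵥ w (σ t) + -(α • a + β • b) ⬝ᵥ p (σ t) = 0 := by
    obtain ⟨hm, ha, hb⟩ := hdot t
    refine ⟨hm, (mul_eq_zero_iff_left (left_ne_zero_of_mul_eq_one ha)).1 ?_⟩
    simp only [neg_dotProduct, add_dotProduct, smul_dotProduct, smul_eq_mul]
    linear_combination hαβ t - α * ha - β * hb
  refine harc (-(α • a + β • b)) (σ t) (σ u) (σ v) (hσ.ne htu) (hσ.ne htv) (hσ.ne huv) ?_
  simp only [Set.mem_insert_iff, Set.mem_singleton_iff, forall_eq_or_imp, forall_eq, on_line,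
    and_self]

end NonvanishingMoments

section CompletedArcs

variable {K ι κ : Type} [Field K]

/-- `p` and `w` are the residues and the infinitesimal parts of a 2-arc `p s + ε w s` over the dual
numbers without two neighbouring points, and the points `N k` complete its residues to a family
representing every point of the projective plane over `K`. -/
structure IsCompletedArc (p w : ι → Fin 3 → K) (N : κ → Fin 3 → K) : Prop where
  eq_of_smul : ∀ s t, ∀ r : K, p t = r • p s → s = t
  exists_smul_eq : ∀ x, (∃ s, ∃ c : K, c • p s = x) ∨ ∃ k, ∃ c : K, c • N k = x
  not_collinear : ∀ m n, m ≠ 0 → ∀ s t u, s ≠ t → s ≠ u → t ≠ u →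
    ¬ ∀ i ∈ ({s, t, u} : Set ι), m ⬝ᵥ p i = 0 ∧ m ⬝ᵥ w i + n ⬝ᵥ p i = 0

variable [Fintype K] [Fintype ι] {p w : ι → Fin 3 → K}

theorem IsCompletedArc.lineMoment_ne_zero {N : κ → Fin 3 → K} (h : IsCompletedArc p w N)
    (hK : Fintype.card K = 4) {m a b : Fin 3 → K} (hmab : m ⬝ᵥ a ⨯₃ b ≠ 0)
    (hN : ∀ k, m ⬝ᵥ N k = 0 → a ⬝ᵥ N k = 0 ∨ b ⬝ᵥ N k = 0) : lineMoment p w m a b ≠ 0 := by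
  have hm : m ≠ 0 := by
    rintro rfl
    exact hmab (zero_dotProduct _)
  refine _root_.lineMoment_ne_zero hK h.eq_of_smul hmab (fun x hmx hax hbx ↦ ?_)
    fun n ↦ h.not_collinear m n hm
  refine (h.exists_smul_eq x).resolve_right ?_
  rintro ⟨k, c, rfl⟩
  rw [dotProduct_smul, smul_eq_mul] at hmx hax hbx
  have hmN : m ⬝ᵥ N k = 0 := (mul_eq_zero_iff_left (left_ne_zero_of_mul hax)).1 hmx
  exact (hN k hmN).elim (right_ne_zero_of_mul hax) (right_ne_zero_of_mul hbx)

theorem IsCompletedArc.lineMoment_self_eq_zero {N : κ → Fin 3 → K} (h : IsCompletedArc p w N)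
    (hK : Fintype.card K = 4) {m a : Fin 3 → K} (hm : m ≠ 0)
    (ha : ∀ k, m ⬝ᵥ N k = 0 → a ⬝ᵥ N k = 0) : lineMoment p w m a a = 0 := by
  by_cases hma : m ⨯₃ a = 0
  · obtain ⟨c, rfl⟩ : ∃ c : K, c • m = a := by
      rw [← not_ne_iff, crossProduct_ne_zero_iff_linearIndependent,
        LinearIndependent.pair_iff' hm] at hma
      simpa using hma
    refine Finset.sum_eq_zero fun s hs ↦ ?_
    rw [smul_dotProduct, (Finset.mem_filter.1 hs).2, smul_zero, mul_zero]
  obtain ⟨b, hb⟩ : ∃ b, b ⬝ᵥ m ⨯₃ a ≠ 0 := by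
    by_contra! hb
    exact hma (dotProduct_eq_zero _ fun b ↦ by rw [dotProduct_comm, hb])
  rw [triple_product_permutation] at hb
  by_contra hQ
  -- The moment of `a` against a suitable `b - r • a` vanishes, although `m`, `a` and `b - r • a`
  -- form a basis.
  let r := lineMoment p w m a b / lineMoment p w m a a
  have hr : lineMoment p w m a (b - r • a) = 0 := by
    have : lineMoment p w m a (b - r • a) = lineMoment p w m a b - r * lineMoment p w m a a := by
      simp only [lineMoment, Finset.mul_sum, ← Finset.sum_sub_distrib, sub_dotProduct,
        smul_dotProduct, smul_eq_mul]
      exact Finset.sum_congr rfl fun s _ ↦ by ring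
    rw [this, div_mul_cancel₀ _ hQ, sub_self]
  refine h.lineMoment_ne_zero hK ?_ (fun k hk ↦ Or.inl (ha k hk)) hr
  rwa [map_sub, map_smul, cross_self, smul_zero, sub_zero]

theorem sum_lineMoment_add_smul_self (hK : Fintype.card K = 4) (m e : Fin 3 → K) :
    ∑ t : K, lineMoment p w (m + t • e) e e =
      m ⬝ᵥ ∑ s, (e ⬝ᵥ p s) • e ⨯₃ (w s ⨯₃ p s) := by
  have := charP_two_of_card_eq_four hK
  have sum_cubes (x y : K) : ∑ t : K, (1 - (x + t * y) ^ 3) = y ^ 3 := by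
    rw [← CharTwo.neg_eq (y ^ 3), ← sum_quintic_eq_coeff hK (1 - x ^ 3) (-3 * x ^ 2 * y)
      (-3 * x * y ^ 2) (-y ^ 3) 0 0]
    exact Finset.sum_congr rfl fun t _ ↦ by ring
  simp only [lineMoment_eq_sum hK, map_add, map_smul, LinearMap.add_apply, LinearMap.smul_apply,
    cross_self, smul_zero, add_zero, add_dotProduct, smul_dotProduct, smul_eq_mul]
  rw [Finset.sum_comm, dotProduct_sum]
  refine Finset.sum_congr rfl fun s _ ↦ ?_
  rw [← Finset.sum_mul, sum_cubes, dotProduct_smul, smul_eq_mul, triple_product_permutation m e,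
    triple_product_permutation e, dotProduct_comm (w s ⨯₃ p s)]
  linear_combination (m ⨯₃ e ⬝ᵥ w s ⨯₃ p s) * pow_four_eq_self_of_card_eq_four hK (e ⬝ᵥ p s)

theorem IsCompletedArc.lineMoment_dual_self [DecidableEq κ] {N e : κ → Fin 3 → K}
    (h : IsCompletedArc p w N) (hK : Fintype.card K = 4)
    (hNe : ∀ k j, N j ⬝ᵥ e k = if k = j then 1 else 0) {m : Fin 3 → K} {k : κ} (hk : m ⬝ᵥ N k = 0) :
    lineMoment p w m (e k) (e k) = m ⬝ᵥ ∑ s, (e k ⬝ᵥ p s) • e k ⨯₃ (w s ⨯₃ p s) := by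
  rw [← sum_lineMoment_add_smul_self hK, Finset.sum_eq_single 0, zero_smul, add_zero]
  · intro t _ ht
    have dot_N (j) : (m + t • e k) ⬝ᵥ N j = m ⬝ᵥ N j + if k = j then t else 0 := by
      rw [add_dotProduct, smul_dotProduct, dotProduct_comm (e k), hNe]
      simp
    refine h.lineMoment_self_eq_zero hK ?_ fun j hj ↦ ?_
    · intro h0
      simpa [h0, hk, ht.symm] using dot_N k
    · rw [dotProduct_comm, hNe, if_neg]
      rintro rfl
      rw [dot_N, hk, if_pos rfl, zero_add] at hj
      exact ht hj
  · simp

theorem IsCompletedArc.lineMoment_self_eq_lineMoment_completion [Fintype κ] [DecidableEq κ]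
    {N e z : κ → Fin 3 → K} (h : IsCompletedArc p w N) (hK : Fintype.card K = 4)
    (hNe : ∀ k j, N j ⬝ᵥ e k = if k = j then 1 else 0)
    (hz : ∀ m k, m ⬝ᵥ N k = 0 → lineMoment p w m (e k) (e k) = m ⬝ᵥ z k) (m a : Fin 3 → K) :
    lineMoment p w m a a = lineMoment N z m a a := by
  have := charP_two_of_card_eq_four hK
  obtain rfl | hm := eq_or_ne m 0
  · simp [lineMoment]
  let b := ∑ k with m ⬝ᵥ N k = 0, (a ⬝ᵥ N k) • e k
  have hab : lineMoment p w m (a - b) (a - b) = 0 := by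
    refine h.lineMoment_self_eq_zero hK hm fun k hk ↦ ?_
    rw [sub_dotProduct, sum_dotProduct, Finset.sum_eq_single_of_mem k (by simp [hk]),
      smul_dotProduct, dotProduct_comm (e k), hNe, if_pos rfl, smul_eq_mul, mul_one, sub_self]
    intro j _ hjk
    rw [smul_dotProduct, dotProduct_comm (e j), hNe, if_neg hjk, smul_zero]
  rw [lineMoment_self_sub, sub_eq_zero] at hab
  rw [hab, lineMoment_self_sum_smul, lineMoment_self]
  refine Finset.sum_congr rfl fun k hk ↦ ?_
  rw [hz m k (Finset.mem_filter.1 hk).2, mul_comm]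

end CompletedArcs

theorem not_isCompletedArc {K ι : Type} [Field K] [Fintype K] [Finite ι]
    (hK : Fintype.card K = 4) {p w : ι → Fin 3 → K} {N : Fin 3 → Fin 3 → K}
    (hN : N 0 ⬝ᵥ N 1 ⨯₃ N 2 ≠ 0) : ¬ IsCompletedArc p w N := by
  intro h
  have := Fintype.ofFinite ι
  have := charP_two_of_card_eq_four hK
  have exists_dual (k : Fin 3) : ∃ x, ∀ j, N j ⬝ᵥ x = if k = j then 1 else 0 := by
    obtain ⟨x, h₀, h₁, h₂⟩ := exists_dotProduct_eq hN
      (if k = 0 then 1 else 0) (if k = 1 then 1 else 0) (if k = 2 then 1 else 0)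
    exact ⟨x, fun j ↦ by fin_cases j <;> assumption⟩
  choose e hNe using exists_dual
  let z (k : Fin 3) := ∑ s, (e k ⬝ᵥ p s) • e k ⨯₃ (w s ⨯₃ p s)
  obtain ⟨m, hm, hm0⟩ := exists_ne_zero_lineMoment_eq_zero (p := Sum.elim p N)
    (w := Sum.elim w z) hK fun m a ↦ by
      rw [lineMoment_sumElim, h.lineMoment_self_eq_lineMoment_completion hK hNe
        (fun m k ↦ h.lineMoment_dual_self hK hNe), CharTwo.add_self_eq_zero]
  obtain ⟨i, j, hij, hmij⟩ := exists_ne_dotProduct_crossProduct_ne_zero hN hNe hm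
  have disjoint_support (k : Fin 3) : e i ⬝ᵥ N k = 0 ∨ e j ⬝ᵥ N k = 0 := by
    rw [dotProduct_comm, hNe, dotProduct_comm, hNe]
    by_cases hik : i = k
    · exact Or.inr (if_neg (hik ▸ hij.symm))
    · exact Or.inl (if_neg hik)
  refine h.lineMoment_ne_zero hK hmij (fun k _ ↦ disjoint_support k) ?_
  rw [← hm0 (e i) (e j), lineMoment_sumElim, left_eq_add]
  refine Finset.sum_eq_zero fun k _ ↦ ?_
  rw [mul_assoc, mul_eq_zero_of_ne_zero_imp_eq_zero (disjoint_support k).resolve_left, mul_zero]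

section UpperBound

variable {K ι : Type} [Field K]

theorem IsTwoArc_s16.not_collinear {v : ι → Fin 3 → DualNumber K} (hv : IsTwoArc_s16 v) (m n : Fin 3 → K)
    (hm : m ≠ 0) (s t u : ι) (hst : s ≠ t) (hsu : s ≠ u) (htu : t ≠ u) :
    ¬ ∀ i ∈ ({s, t, u} : Set ι), (m ⬝ᵥ fun j ↦ (v i j).fst) = 0 ∧
      (m ⬝ᵥ fun j ↦ (v i j).snd) + (n ⬝ᵥ fun j ↦ (v i j).fst) = 0 := by
  intro h
  have l_dot (i : ι) (hi : i ∈ ({s, t, u} : Set ι)) : dualVec m n ⬝ᵥ v i = 0 := by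
    rw [dualVec_dotProduct, (h i hi).1, (h i hi).2, TrivSqZeroExt.inl_zero,
      TrivSqZeroExt.inr_zero, add_zero]
  obtain ⟨j, hj⟩ := Function.ne_iff.1 hm
  exact hv (dualVec m n) ⟨j, dualNumber_isUnit_iff.2 (by simpa [dualVec] using hj)⟩
    s t u hst hsu htu ⟨l_dot s (by simp), l_dot t (by simp), l_dot u (by simp)⟩

variable [Fintype K] [Fintype ι]

theorem exists_completing_points (hι : Fintype.card K ^ 2 + Fintype.card K = Fintype.card ι + 1)
    {p : ι → Fin 3 → K} (hp₀ : ∀ s, p s ≠ 0) (hp : ∀ s t, ∀ r : K, p t = r • p s → s = t) :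
    ∃ N : Fin 3 → Fin 3 → K, N 0 ⬝ᵥ N 1 ⨯₃ N 2 ≠ 0 ∧
      ∀ x, (∃ s, ∃ c : K, c • p s = x) ∨ ∃ k, ∃ c : K, c • N k = x := by
  let f (s : ι) : Projectivization K (Fin 3 → K) := .mk K (p s) (hp₀ s)
  have hf : f.Injective := fun s t hst ↦ by
    obtain ⟨r, hr⟩ := (Projectivization.mk_eq_mk_iff' _ _ _ _ _).1 hst
    exact (hp t s r hr.symm).symm
  have : Fintype (Projectivization K (Fin 3 → K)) := Fintype.ofFinite _
  have card_compl : (Finset.univ.image f)ᶜ.card = 2 := by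
    have card_plane := Projectivization.card_of_finrank K (Fin 3 → K) (n := 3) (by simp)
    simp only [Finset.sum_range_succ, Finset.sum_range_zero, Nat.card_eq_fintype_card,
      pow_zero, pow_one, zero_add] at card_plane
    rw [Finset.card_compl, Finset.card_image_of_injective _ hf, Finset.card_univ, card_plane]
    omega
  obtain ⟨P, Q, hPQ, hcompl⟩ := Finset.card_eq_two.1 card_compl
  have hcross : P.rep ⨯₃ Q.rep ≠ 0 := by
    rw [crossProduct_ne_zero_iff_linearIndependent, LinearIndependent.pair_iff' P.rep_nonzero]
    intro c hc
    refine hPQ ?_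
    rw [← P.mk_rep, ← Q.mk_rep, eq_comm, Projectivization.mk_eq_mk_iff']
    exact ⟨c, hc⟩
  obtain ⟨x, hx⟩ : ∃ x, P.rep ⨯₃ Q.rep ⬝ᵥ x ≠ 0 := by
    by_contra! h
    exact hcross (dotProduct_eq_zero _ h)
  refine ⟨![P.rep, Q.rep, x], ?_, fun y ↦ ?_⟩
  · rwa [dotProduct_comm, triple_product_permutation] at hx
  obtain rfl | hy := eq_or_ne y 0
  · exact Or.inr ⟨0, 0, zero_smul _ _⟩
  by_cases hyf : Projectivization.mk K y hy ∈ Finset.univ.image f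
  · obtain ⟨s, -, hs⟩ := Finset.mem_image.1 hyf
    exact Or.inl ⟨s, (Projectivization.mk_eq_mk_iff' _ _ _ _ _).1 hs.symm⟩
  · rw [← Finset.mem_compl, hcompl, Finset.mem_insert, Finset.mem_singleton, ← P.mk_rep,
      ← Q.mk_rep, Projectivization.mk_eq_mk_iff', Projectivization.mk_eq_mk_iff'] at hyf
    exact Or.inr (hyf.elim (fun h ↦ ⟨0, h⟩) fun h ↦ ⟨1, h⟩)

theorem IsTwoArc_s16.card_le_eighteen (hK : Fintype.card K = 4) {v : ι → Fin 3 → DualNumber K}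
    (hv : IsTwoArc_s16 v) (hunit : ∀ s, ∃ i, IsUnit (v s i)) : Fintype.card ι ≤ 18 := by
  by_contra! hι
  obtain ⟨g⟩ : Nonempty (Fin 19 ↪ ι) :=
    Function.Embedding.nonempty_of_card_le (by rwa [Fintype.card_fin])
  let p (s : Fin 19) (i : Fin 3) : K := (v (g s) i).fst
  have hp₀ (s) : p s ≠ 0 := by
    obtain ⟨i, hi⟩ := hunit (g s)
    exact Function.ne_iff.2 ⟨i, dualNumber_isUnit_iff.1 hi⟩
  have hp (s t) (r : K) (hr : p t = r • p s) : s = t := by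
    by_contra hst
    have := hv.card_le_of_neighbours (g.injective.ne hst) (hunit (g s)) (congrFun hr)
    rw [hK] at this
    omega
  obtain ⟨N, hN, hcov⟩ := exists_completing_points (by rw [hK, Fintype.card_fin]; norm_num) hp₀ hp
  refine not_isCompletedArc hK hN (p := p) (w := fun s i ↦ (v (g s) i).snd) ⟨hp, hcov, ?_⟩
  intro m n hm s t u hst hsu htu h
  refine hv.not_collinear m n hm (g s) (g t) (g u) (g.injective.ne hst) (g.injective.ne hsu)
    (g.injective.ne htu) ?_
  simpa only [Set.mem_insert_iff, Set.mem_singleton_iff, forall_eq_or_imp, forall_eq] using h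

theorem exists_isLine_three_le_card_filter (hK : Fintype.card K = 4)
    {M : Multiset (Submodule (DualNumber K) (Fin 3 → DualNumber K))} (hM : ∀ P ∈ M, IsPoint P)
    (hcard : 18 < Multiset.card M) :
    ∃ L : Submodule (DualNumber K) (Fin 3 → DualNumber K), IsLine L ∧
      3 ≤ Multiset.card (M.filter fun P ↦ P ≤ L) := by
  choose v hunit hspan using fun i : M ↦ hM i.1 (Multiset.coe_mem)
  have not_twoArc : ¬ IsTwoArc_s16 v := fun hv ↦
    hcard.not_ge (by simpa using hv.card_le_eighteen hK hunit)
  simp only [IsTwoArc_s16] at not_twoArc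
  push Not at not_twoArc
  obtain ⟨l, hl, s, t, u, hst, hsu, htu, hs, ht, hu⟩ := not_twoArc
  refine ⟨LinearMap.ker (dotProductEquiv _ _ l), isFreeRank_ker_dotProduct hl, ?_⟩
  have le_ker (i : M) (hi : l ⬝ᵥ v i = 0) : i.1 ≤ LinearMap.ker (dotProductEquiv _ _ l) := by
    rw [hspan, Submodule.span_singleton_le_iff_mem]
    exact hi
  have card_three :
      3 ≤ (Finset.univ.filter fun i : M ↦ i.1 ≤ LinearMap.ker (dotProductEquiv _ _ l)).card := by
    refine Finset.two_lt_card.2 ⟨s, ?_, t, ?_, u, ?_, hst, hsu, htu⟩ <;>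
      rw [Finset.mem_filter_univ]
    exacts [le_ker s hs, le_ker t ht, le_ker u hu]
  rw [← Multiset.map_univ_coe M, Multiset.filter_map, Multiset.card_map]
  exact card_three

end UpperBound

section LowerBound

variable {K : Type} [Field K]

/-- The residues of the 2-arc of size 18: the affine points of the plane and two points of the
line at infinity. -/
def arcResidue : (K × K) ⊕ Fin 2 → Fin 3 → K
  | .inl (x, y) => ![x, y, 1]
  | .inr k => ![![1, 0, 0], ![0, 1, 0]] k

theorem arcResidue_cross_ne_zero {s t : (K × K) ⊕ Fin 2} (hst : s ≠ t) :
    arcResidue s ⨯₃ arcResidue t ≠ 0 := by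
  contrapose! hst
  simp only [cross_apply, cons_eq_zero_iff] at hst
  obtain ⟨x, y⟩ | k := s <;> obtain ⟨x', y'⟩ | k' := t
  · simp only [arcResidue, cons_val, mul_one, one_mul, zero_empty, and_true] at hst
    rw [sub_eq_zero.1 hst.1, sub_eq_zero.1 hst.2.1]
  · fin_cases k' <;> simp [arcResidue] at hst
  · fin_cases k <;> simp [arcResidue] at hst
  · fin_cases k <;> fin_cases k' <;> simp_all [arcResidue]

variable [Fintype K]

/-- The infinitesimal parts of the 2-arc of size 18, as a function of the residue `p`. It is
homogeneous of degree 4, so that it commutes with scalars from the field with 4 elements. -/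
def quarticMap (c : K) (p : Fin 3 → K) : Fin 3 → K := ![(p 1 * p 2) ^ 2, c * (p 0 * p 2) ^ 2, 0]

theorem quarticMap_smul_add_smul (hK : Fintype.card K = 4) (c x y : K) (p q : Fin 3 → K) :
    quarticMap c (x • p + y • q) = x • quarticMap c p + y • quarticMap c q +
      (x * y) ^ 2 • ![(p ⨯₃ q) 0 ^ 2, c * (p ⨯₃ q) 1 ^ 2, 0] := by
  have := charP_two_of_card_eq_four hK
  have hx := pow_four_eq_self_of_card_eq_four hK x
  have hy := pow_four_eq_self_of_card_eq_four hK y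
  simp only [quarticMap, cross_apply, Pi.add_apply, Pi.smul_apply, smul_eq_mul, cons_val,
    smul_cons, smul_empty, cons_add_cons, empty_add_empty, mul_zero, add_zero,
    CharTwo.sub_eq_add, mul_add, add_mul, CharTwo.add_sq]
  congr 1
  · linear_combination (p 1 * p 2) ^ 2 * hx + (q 1 * q 2) ^ 2 * hy
  · congr 1
    linear_combination c * (p 0 * p 2) ^ 2 * hx + c * (q 0 * q 2) ^ 2 * hy

theorem cube_eq_of_dotProduct_crossProduct_eq_zero (hK : Fintype.card K = 4) {c x y : K}
    (hx : x ≠ 0) (hy : y ≠ 0) {p q : Fin 3 → K}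
    (h : dualVec p (quarticMap c p) ⬝ᵥ dualVec q (quarticMap c q) ⨯₃
      dualVec (x • p + y • q) (quarticMap c (x • p + y • q)) = 0) :
    (p ⨯₃ q) 0 ^ 3 = c * (p ⨯₃ q) 1 ^ 3 := by
  have := charP_two_of_card_eq_four hK
  rw [dualVec_dotProduct_crossProduct, quarticMap_smul_add_smul hK] at h
  have h_snd := congrArg TrivSqZeroExt.snd h
  simp only [TrivSqZeroExt.snd_add, TrivSqZeroExt.snd_inl, TrivSqZeroExt.snd_inr, zero_add,
    TrivSqZeroExt.snd_zero] at h_snd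
  have defect : (x * y) ^ 2 * ((p ⨯₃ q) 0 ^ 3 + c * (p ⨯₃ q) 1 ^ 3) = 0 := by
    rw [← h_snd]
    simp only [cross_apply, vec3_dotProduct, cons_val, Pi.add_apply, Pi.smul_apply, smul_eq_mul]
    ring
  rw [mul_eq_zero_iff_left (pow_ne_zero 2 (mul_ne_zero hx hy))] at defect
  exact CharTwo.add_eq_zero.1 defect

theorem eq_zero_of_dualVec_dotProduct_crossProduct_eq_zero (hK : Fintype.card K = 4) {c : K}
    (hc₀ : c ≠ 0) (hc₁ : c ≠ 1) {p q r : Fin 3 → K} (hpq : p ⨯₃ q ≠ 0) (hpr : p ⨯₃ r ≠ 0)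
    (hqr : q ⨯₃ r ≠ 0) (h : dualVec p (quarticMap c p) ⬝ᵥ
      dualVec q (quarticMap c q) ⨯₃ dualVec r (quarticMap c r) = 0) :
    p 2 = 0 ∧ q 2 = 0 ∧ r 2 = 0 := by
  have h_fst : p ⬝ᵥ q ⨯₃ r = 0 := by
    rw [dualVec_dotProduct_crossProduct] at h
    simpa using congrArg TrivSqZeroExt.fst h
  obtain ⟨x, y, rfl⟩ := exists_eq_smul_add_smul hpq h_fst
  have hy : y ≠ 0 := by
    rintro rfl
    exact hpr (by simp)
  have hx : x ≠ 0 := by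
    rintro rfl
    exact hqr (by simp)
  have cubes := cube_eq_of_dotProduct_crossProduct_eq_zero hK hx hy h
  have cross_one : (p ⨯₃ q) 1 = 0 := by
    by_contra hne
    rw [pow_three_eq_one_of_card_eq_four hK hne, mul_one] at cubes
    refine hc₁ (cubes ▸ pow_three_eq_one_of_card_eq_four hK fun h0 ↦ hc₀ ?_)
    rw [← cubes, h0, zero_pow three_ne_zero]
  have cross_zero : (p ⨯₃ q) 0 = 0 := by
    rw [cross_one, zero_pow three_ne_zero, mul_zero] at cubes
    exact eq_zero_of_pow_eq_zero cubes
  have cross_two : (p ⨯₃ q) 2 ≠ 0 := fun h0 ↦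
    hpq (funext (by simp [Fin.forall_fin_succ, *]))
  have third_coord (x : Fin 3 → K) (hx : p ⨯₃ q ⬝ᵥ x = 0) : x 2 = 0 := by
    rw [vec3_dotProduct, cross_zero, cross_one] at hx
    simpa [cross_two] using hx
  have hp := third_coord p (by rw [dotProduct_comm, dot_self_cross])
  have hq := third_coord q (by rw [dotProduct_comm, dot_cross_self])
  exact ⟨hp, hq, by simp [hp, hq]⟩

theorem exists_dotProduct_crossProduct_ne_zero (hK : Fintype.card K = 4) :
    ∃ v : (K × K) ⊕ Fin 2 → Fin 3 → DualNumber K, (∀ s, ∃ i, IsUnit (v s i)) ∧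
      ∀ s t u, s ≠ t → s ≠ u → t ≠ u → v s ⬝ᵥ v t ⨯₃ v u ≠ 0 := by
  obtain ⟨c, hc₀, hc₁⟩ := ENat.exists_ne_ne_of_three_le (α := K)
    (by rw [ENat.card_eq_coe_fintype_card, hK]; norm_num) 0 1
  refine ⟨fun s ↦ dualVec (arcResidue s) (quarticMap c (arcResidue s)), fun s ↦ ?_,
    fun s t u hst hsu htu h ↦ ?_⟩
  · obtain ⟨i, hi⟩ : ∃ i, arcResidue s i ≠ 0 := by
      obtain ⟨x, y⟩ | k := s
      · exact ⟨2, one_ne_zero⟩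
      · exact ⟨k.castSucc, by fin_cases k <;> exact one_ne_zero⟩
    exact ⟨i, dualNumber_isUnit_iff.2 (by simpa [dualVec] using hi)⟩
  · obtain ⟨hs, ht, hu⟩ := eq_zero_of_dualVec_dotProduct_crossProduct_eq_zero hK hc₀ hc₁
      (arcResidue_cross_ne_zero hst) (arcResidue_cross_ne_zero hsu)
      (arcResidue_cross_ne_zero htu) h
    have exists_inr {s : (K × K) ⊕ Fin 2} (hs : arcResidue s 2 = 0) : ∃ k, s = .inr k := by
      obtain ⟨x, y⟩ | k := s
      · exact absurd hs one_ne_zero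
      · exact ⟨k, rfl⟩
    obtain ⟨i, rfl⟩ := exists_inr hs
    obtain ⟨j, rfl⟩ := exists_inr ht
    obtain ⟨k, rfl⟩ := exists_inr hu
    simp only [ne_eq, Sum.inr.injEq] at hst hsu htu
    omega

end LowerBound

/-- The maximum size of a 2-arc in PHG(2, 𝔽₄[X]/(X²)) is 18: there is a set of 18
points with at most 2 on each line, but every multiset of 19 points has a line
containing at least 3 of its points counted with multiplicity. -/
theorem max_two_arc_S4 :
    (∃ A : Set (Submodule S4 (Fin 3 → S4)), (∀ P ∈ A, IsPoint P) ∧ A.ncard = 18 ∧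
      ∀ L : Submodule S4 (Fin 3 → S4), IsLine L → {P ∈ A | P ≤ L}.ncard ≤ 2) ∧
    (∀ M : Multiset (Submodule S4 (Fin 3 → S4)), (∀ P ∈ M, IsPoint P) →
      Multiset.card M = 19 →
      ∃ L : Submodule S4 (Fin 3 → S4), IsLine L ∧
        3 ≤ Multiset.card (M.filter fun P => P ≤ L)) := by
  have : Fintype (GaloisField 2 2) := Fintype.ofFinite _
  have hK : Fintype.card (GaloisField 2 2) = 4 := by
    rw [← Nat.card_eq_fintype_card, GaloisField.card 2 2 two_ne_zero]
    norm_num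
  constructor
  · obtain ⟨v, hunit, hv⟩ := exists_dotProduct_crossProduct_ne_zero hK
    have card_index : Fintype.card ((GaloisField 2 2 × GaloisField 2 2) ⊕ Fin 2) = 18 := by
      simp [hK]
    rw [← card_index]
    exact exists_set_isPoint_of_dotProduct_crossProduct_ne_zero
      (by rw [card_index]; norm_num) hunit hv
  · intro M hM hcard
    exact exists_isLine_three_le_card_filter hK hM (by rw [hcard]; norm_num)
end

section
/- Every multiset of 11 points in the projective Hjelmslev 3-space PHG(3, ℤ/4ℤ) has a hyperplane containing at least 5 of its points counted with multiplicity (so the maximum size of a 4-arc in PHG(3, ℤ/4ℤ) is 10, which is strictly smaller than the value 11 attained over 𝔽₂[X]/(X²)). -/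
/-- A hyperplane of PHG(3, R): a free rank-3 submodule of R⁴. -/
abbrev IsHyperplane {R : Type} [CommRing R] (H : Submodule R (Fin 4 → R)) : Prop := IsFreeRank 3 H

attribute [local instance] Classical.propDecidable

/-!
The hyperplanes with coefficients `w + 2a` share their reduction modulo 2 with that of `w`, and a
point on the reduction lies on exactly half of them. Averaging over `a`, an arc with at most `u`
points on each hyperplane and more than `2u` points in all has a point off each hyperplane modulo 2.
Hence its points contain a basis, which a change of coordinates turns into the standard frame. The
monomial maps preserve the frame and bring a further point, chosen of maximal weight, into a normal
form. For 11 points in dimension 3 this leaves a few configurations of five points, none of which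
extends by six points of at most the same weight to a 4-arc. That is settled by exhaustive search:
a point is represented by the bit mask of the hyperplanes through it, and the numbers of points on
all hyperplanes are counted simultaneously by bitwise operations.
-/

namespace PHG

section Hyperplanes

variable {R : Type} [CommRing R] {n : ℕ}

/-- The submodule of solutions of the linear equation with coefficient vector `w`. -/
def hyperplane (w : Fin n → R) : Submodule R (Fin n → R) :=
  LinearMap.ker (dotProductBilin R R w)

theorem mem_hyperplane {v w : Fin n → R} : v ∈ hyperplane w ↔ w ⬝ᵥ v = 0 :=
  LinearMap.mem_ker

theorem span_singleton_le_hyperplane {v w : Fin n → R} :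
    Submodule.span R {v} ≤ hyperplane w ↔ w ⬝ᵥ v = 0 := by
  rw [Submodule.span_singleton_le_iff_mem, mem_hyperplane]

theorem isFreeRank_hyperplane {w : Fin (n + 1) → R} (hw : ∃ i, IsUnit (w i)) :
    IsFreeRank n (hyperplane w) := by
  obtain ⟨i, u, hu⟩ := hw
  have dot_eq (v : Fin (n + 1) → R) :
      w ⬝ᵥ v = u * v i + ∑ j, w (i.succAbove j) * v (i.succAbove j) := by
    rw [dotProduct, Fin.sum_univ_succAbove _ i, hu]
  let dropCoord : hyperplane w →ₗ[R] Fin n → R :=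
    (LinearMap.funLeft R R i.succAbove).domRestrict (hyperplane w)
  refine ⟨(LinearEquiv.ofBijective dropCoord ⟨?_, fun c => ?_⟩).symm⟩
  · rw [← LinearMap.ker_eq_bot, LinearMap.ker_eq_bot']
    rintro ⟨v, hv⟩ hv0
    have hoff (j) : v (i.succAbove j) = 0 := congrFun hv0 j
    have hi : v i = 0 := by simpa [mem_hyperplane, dot_eq, hoff] using hv
    ext j
    exact Fin.succAboveCases i hi hoff j
  · let v : Fin (n + 1) → R := i.insertNth (-(↑u⁻¹ * ∑ j, w (i.succAbove j) * c j)) c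
    have hv : v ∈ hyperplane w := by simp [mem_hyperplane, dot_eq, v]
    refine ⟨⟨v, hv⟩, funext fun j => ?_⟩
    exact i.insertNth_apply_succAbove (α := fun _ => R) _ c j

theorem card_quotient [Finite R] {H : Submodule R (Fin (n + 1) → R)} (hH : IsFreeRank n H) :
    Nat.card ((Fin (n + 1) → R) ⧸ H) = Nat.card R := by
  obtain ⟨e⟩ := hH
  have h := H.card_eq_card_quotient_mul_card
  rw [← Nat.card_congr e.toEquiv, Nat.card_fun, Nat.card_fun, Nat.card_fin, Nat.card_fin,
    pow_succ] at h
  exact Nat.eq_of_mul_eq_mul_left (pow_pos Nat.card_pos n) h.symm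

theorem exists_isUnit_of_isUnit_dotProduct [IsLocalRing R] {v w : Fin n → R}
    (h : IsUnit (w ⬝ᵥ v)) : ∃ i, IsUnit (w i) := by
  contrapose! h
  exact (IsLocalRing.mem_maximalIdeal _).1 <| Ideal.sum_mem _ fun i _ =>
    Ideal.mul_mem_right _ _ ((IsLocalRing.mem_maximalIdeal _).2 (h i))

theorem exists_eq_dotProduct (g : (Fin n → R) →ₗ[R] R) : ∃ w, ∀ v, g v = w ⬝ᵥ v :=
  ⟨(dotProductEquiv R (Fin n)).symm g, fun v =>
    (LinearMap.congr_fun ((dotProductEquiv R (Fin n)).apply_symm_apply g) v).symm⟩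

-- The residue field is the only simple module, so a coatom is the preimage of a hyperplane over
-- the residue field.
theorem exists_forall_not_isUnit_dotProduct [IsLocalRing R] {S : Submodule R (Fin n → R)}
    (hS : S ≠ ⊤) :
    ∃ w : Fin n → R, (∃ i, IsUnit (w i)) ∧ ∀ v ∈ S, ¬IsUnit (w ⬝ᵥ v) := by
  obtain ⟨K, hK, hSK⟩ := (eq_top_or_exists_le_coatom S).resolve_left hS
  obtain ⟨I, hI, ⟨e⟩⟩ := isSimpleModule_iff_quot_maximal.1 (isSimpleModule_iff_isCoatom.2 hK)
  obtain ⟨g, hg⟩ := Module.projective_lifting_property I.mkQ (e.toLinearMap ∘ₗ K.mkQ)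
    I.mkQ_surjective
  obtain ⟨w, hw⟩ := exists_eq_dotProduct g
  have isUnit_iff (v : Fin n → R) : IsUnit (w ⬝ᵥ v) ↔ v ∉ K := by
    have h : w ⬝ᵥ v ∈ I ↔ v ∈ K := by
      rw [← hw, ← Submodule.Quotient.mk_eq_zero, ← Submodule.mkQ_apply, ← LinearMap.comp_apply, hg]
      simp
    rw [← h, IsLocalRing.eq_maximalIdeal hI, IsLocalRing.mem_maximalIdeal, mem_nonunits_iff,
      not_not]
  obtain ⟨v, -, hv⟩ := SetLike.exists_of_lt hK.lt_top
  exact ⟨w, exists_isUnit_of_isUnit_dotProduct ((isUnit_iff v).2 hv),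
    fun v hv => fun h => (isUnit_iff v).1 h (hSK hv)⟩

theorem exists_basis_mem [IsLocalRing R] {s : Set (Fin n → R)}
    (hs : ∀ w : Fin n → R, (∃ i, IsUnit (w i)) → ∃ v ∈ s, IsUnit (w ⬝ᵥ v)) :
    ∃ b : Module.Basis (Fin n) R (Fin n → R), ∀ i, b i ∈ s := by
  have hspan : Submodule.span R (Set.range ((↑) : s → Fin n → R)) = ⊤ := by
    rw [Subtype.range_coe]
    by_contra h
    obtain ⟨w, hw, hws⟩ := exists_forall_not_isUnit_dotProduct h
    obtain ⟨v, hv, hwv⟩ := hs w hw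
    exact hws v (Submodule.subset_span hv) hwv
  obtain ⟨κ, a, b, hb⟩ := Module.exists_basis_of_span_of_flat _ hspan
  refine ⟨b.reindex (b.indexEquiv (Pi.basisFun R (Fin n))), fun i => ?_⟩
  rw [Module.Basis.reindex_apply, hb]
  exact Subtype.coe_prop _

end Hyperplanes

section ZModFour

variable {n : ℕ}

instance : IsLocalRing (ZMod 4) :=
  have : Nontrivial (ZMod 4) := ⟨0, 1, by decide⟩
  .of_isUnit_or_isUnit_one_sub_self (by decide)

theorem exists_two_smul_notMem {H : Submodule (ZMod 4) (Fin (n + 1) → ZMod 4)}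
    (hH : IsFreeRank n H) : ∃ x, (2 : ZMod 4) • x ∉ H := by
  by_contra! h
  obtain ⟨e⟩ := hH
  let Torsion := {a : ZMod 4 // 2 * a = 0}
  have mem (a : Fin (n + 1) → Torsion) : (fun i => (a i : ZMod 4)) ∈ H := by
    have half : ∀ a : ZMod 4, 2 * a = 0 → ∃ b, 2 * b = a := by decide
    choose b hb using fun i => half _ (a i).2
    convert h b using 1
    exact funext fun i => (hb i).symm
  let f (a : Fin (n + 1) → Torsion) (j : Fin n) : Torsion := ⟨e.symm ⟨_, mem a⟩ j, by
    have : (2 : ZMod 4) • (⟨_, mem a⟩ : H) = 0 := Subtype.ext (funext fun i => (a i).2)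
    rw [← smul_eq_mul, ← Pi.smul_apply, ← map_smul, this, map_zero, Pi.zero_apply]⟩
  have hf : Function.Injective f := fun a b hab => by
    have : e.symm ⟨_, mem a⟩ = e.symm ⟨_, mem b⟩ :=
      funext fun j => congrArg Subtype.val (congrFun hab j)
    exact funext fun i => Subtype.ext (congrFun (congrArg Subtype.val (e.symm.injective this)) i)
  have card_torsion : Fintype.card Torsion = 2 := by decide
  have := Fintype.card_le_of_injective f hf
  simp [card_torsion, pow_succ] at this

theorem exists_eq_hyperplane {H : Submodule (ZMod 4) (Fin (n + 1) → ZMod 4)}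
    (hH : IsFreeRank n H) :
    ∃ w : Fin (n + 1) → ZMod 4, (∃ i, IsUnit (w i)) ∧ H = hyperplane w := by
  obtain ⟨x, hx⟩ := exists_two_smul_notMem hH
  let f : ZMod 4 →ₗ[ZMod 4] _ ⧸ H := LinearMap.toSpanSingleton _ _ (H.mkQ x)
  have hf : Function.Injective f := by
    rw [← LinearMap.ker_eq_bot, LinearMap.ker_eq_bot']
    intro c hc
    have hcx : c • x ∈ H := by
      rwa [← Submodule.Quotient.mk_eq_zero, Submodule.Quotient.mk_smul]
    have divides : ∀ c : ZMod 4, c ≠ 0 → ∃ d, d * c = 2 := by decide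
    by_contra hc0
    obtain ⟨d, hd⟩ := divides c hc0
    exact hx (hd ▸ mul_smul d c x ▸ H.smul_mem d hcx)
  have hf' : Function.Bijective f :=
    (Nat.bijective_iff_injective_and_card f).2 ⟨hf, (card_quotient hH).symm⟩
  let e := LinearEquiv.ofBijective f hf'
  obtain ⟨w, hw⟩ := exists_eq_dotProduct (e.symm.toLinearMap ∘ₗ H.mkQ)
  refine ⟨w, exists_isUnit_of_isUnit_dotProduct (v := x) ?_, ?_⟩
  · have he : e 1 = H.mkQ x := one_smul (ZMod 4) (H.mkQ x)
    rw [← hw, LinearMap.comp_apply, ← he, LinearEquiv.coe_coe, e.symm_apply_apply]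
    exact isUnit_one
  · ext v
    rw [mem_hyperplane, ← hw, LinearMap.comp_apply, LinearEquiv.coe_coe, e.symm.map_eq_zero_iff,
      Submodule.mkQ_apply, Submodule.Quotient.mk_eq_zero]

end ZModFour

section Arcs

variable {R : Type} [CommRing R] {n : ℕ}

/-- A multiset of points of PHG(n, R) with at most `u` points on each hyperplane. -/
def IsArc (u : ℕ) (M : Multiset (Submodule R (Fin (n + 1) → R))) : Prop :=
  (∀ P ∈ M, IsPoint P) ∧ ∀ H, IsFreeRank n H → M.countP (· ≤ H) ≤ u

theorem exists_eq_map_span {M : Multiset (Submodule R (Fin n → R))} (hM : ∀ P ∈ M, IsPoint P) :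
    ∃ V : Multiset (Fin n → R), (∀ v ∈ V, ∃ i, IsUnit (v i)) ∧
      M = V.map fun v => Submodule.span R {v} := by
  choose! g hg hgP using hM
  refine ⟨M.map g, by simpa using hg, ?_⟩
  rw [Multiset.map_map]
  exact ((Multiset.map_congr rfl fun P hP => (hgP P hP).symm).trans (Multiset.map_id' M)).symm

theorem isPoint_map [IsLocalRing R] {P : Submodule R (Fin n → R)}
    (e : (Fin n → R) ≃ₗ[R] Fin n → R) (hP : IsPoint P) : IsPoint (P.map e.toLinearMap) := by
  obtain ⟨v, ⟨i, hi⟩, rfl⟩ := hP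
  refine ⟨e v, ?_, by rw [Submodule.map_span, Set.image_singleton]; rfl⟩
  obtain ⟨w, hw⟩ := exists_eq_dotProduct (LinearMap.proj i ∘ₗ e.symm.toLinearMap)
  have hw' : w ⬝ᵥ e v = v i := by simp [← hw]
  rw [← hw', dotProduct_comm] at hi
  exact exists_isUnit_of_isUnit_dotProduct hi

theorem isFreeRank_map {k : ℕ} {L : Submodule R (Fin n → R)}
    (e : (Fin n → R) ≃ₗ[R] Fin n → R) (hL : IsFreeRank k L) :
    IsFreeRank k (L.map e.toLinearMap) :=
  hL.map fun f => f.trans (e.submoduleMap L)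

theorem IsArc.map [IsLocalRing R] {u : ℕ} {M : Multiset (Submodule R (Fin (n + 1) → R))}
    (hM : IsArc u M) (e : (Fin (n + 1) → R) ≃ₗ[R] Fin (n + 1) → R) :
    IsArc u (M.map (Submodule.map e.toLinearMap)) := by
  refine ⟨fun P hP => ?_, fun H hH => ?_⟩
  · obtain ⟨Q, hQ, rfl⟩ := Multiset.mem_map.1 hP
    exact isPoint_map e (hM.1 Q hQ)
  · rw [Multiset.countP_map, ← Multiset.countP_eq_card_filter]
    refine le_trans (le_of_eq ?_) (hM.2 _ (isFreeRank_map e.symm hH))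
    exact Multiset.countP_congr rfl fun P _ => by
      rw [Submodule.map_le_iff_le_comap, Submodule.map_equiv_eq_comap_symm, LinearEquiv.symm_symm]

theorem IsArc.countP_dotProduct_le [DecidableEq R] {u : ℕ} {V : Multiset (Fin (n + 1) → R)}
    (hV : IsArc u (V.map fun v => Submodule.span R {v})) {w : Fin (n + 1) → R}
    (hw : ∃ i, IsUnit (w i)) : V.countP (fun v => w ⬝ᵥ v = 0) ≤ u := by
  have h := hV.2 _ (isFreeRank_hyperplane hw)
  rw [Multiset.countP_map, ← Multiset.countP_eq_card_filter] at h
  exact (Multiset.countP_congr rfl fun v _ => propext span_singleton_le_hyperplane).symm.trans_le h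

/-- The coordinate points of PHG(n - 1, R). -/
def frame (R : Type) [CommRing R] (n : ℕ) : Multiset (Submodule R (Fin n → R)) :=
  Finset.univ.val.map fun i => Submodule.span R {Pi.single i 1}

theorem exists_map_eq_frame_add [Nontrivial R] {M : Multiset (Submodule R (Fin n → R))}
    (b : Module.Basis (Fin n) R (Fin n → R)) (hb : ∀ i, Submodule.span R {b i} ∈ M) :
    ∃ T, M.map (Submodule.map b.equivFun.toLinearMap) = frame R n + T := by
  have hinj : Function.Injective fun i => Submodule.span R {b i} :=
    b.linearIndependent.iSupIndep_span_singleton.injective fun i =>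
      (Submodule.span_singleton_eq_bot.not).2 (b.ne_zero i)
  obtain ⟨T, rfl⟩ := Multiset.le_iff_exists_add.1 <| (Multiset.le_iff_subset
    (Finset.univ.nodup.map hinj)).2 fun P hP => by
      obtain ⟨i, -, rfl⟩ := Multiset.mem_map.1 hP
      exact hb i
  refine ⟨T.map (Submodule.map b.equivFun.toLinearMap), ?_⟩
  rw [Multiset.map_add, Multiset.map_map, frame]
  congr 1
  refine Multiset.map_congr rfl fun i _ => ?_
  rw [Function.comp_apply, Submodule.map_span, Set.image_singleton]
  congr 2
  ext j
  simp [Pi.single_apply, eq_comm]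

/-- The generators of points whose first unit coordinate is `1`. -/
def IsNormalized (v : Fin n → R) : Prop := ∃ i, v i = 1 ∧ ∀ j < i, ¬IsUnit (v j)

theorem IsNormalized.exists_isUnit {v : Fin n → R} (hv : IsNormalized v) : ∃ i, IsUnit (v i) :=
  let ⟨i, hi, _⟩ := hv
  ⟨i, hi ▸ isUnit_one⟩

theorem exists_isNormalized_smul {v : Fin n → R} (hv : ∃ i, IsUnit (v i)) :
    ∃ c : Rˣ, IsNormalized (c • v) := by
  obtain ⟨i, ⟨u, hu⟩, hi⟩ := (wellFounded_lt (α := Fin n)).has_min {i | IsUnit (v i)} hv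
  refine ⟨u⁻¹, i, ?_, fun j hj hju => hi j ?_ hj⟩
  · simp [Units.smul_def, ← hu]
  · simpa [Units.smul_def] using hju

end Arcs

section Averaging

variable {n : ℕ}

theorem two_mul_card_orthogonal {v w : Fin n → ZMod 4} (hv : ∃ i, IsUnit (v i))
    (hwv : ¬IsUnit (w ⬝ᵥ v)) :
    2 * (Finset.univ.filter fun a : Fin n → ZMod 4 => (w + (2 : ZMod 4) • a) ⬝ᵥ v = 0).card =
      4 ^ n := by
  obtain ⟨i, hi⟩ := hv
  have flip : ∀ c x y : ZMod 4, IsUnit c → ¬IsUnit x →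
      (x + 2 * y = 0 ↔ ¬x + 2 * (y + c) = 0) := by decide
  rw [two_mul]
  nth_rw 2 [Finset.card_equiv (Equiv.addRight (Pi.single i 1)) (t := Finset.univ.filter
    fun a : Fin n → ZMod 4 => ¬(w + (2 : ZMod 4) • a) ⬝ᵥ v = 0) fun a => ?_]
  · rw [Finset.card_filter_add_card_filter_not]
    simp
  · simpa [add_dotProduct] using flip _ _ (a ⬝ᵥ v) hi hwv

theorem two_mul_sum_countP_orthogonal {w : Fin n → ZMod 4} {V : Multiset (Fin n → ZMod 4)}
    (hV : ∀ v ∈ V, (∃ i, IsUnit (v i)) ∧ ¬IsUnit (w ⬝ᵥ v)) :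
    2 * ∑ a : Fin n → ZMod 4, V.countP (fun v => (w + (2 : ZMod 4) • a) ⬝ᵥ v = 0) =
      V.card * 4 ^ n := by
  induction V using Multiset.induction_on with
  | empty => simp
  | cons v V ih =>
    obtain ⟨⟨hv, hwv⟩, hV⟩ := Multiset.forall_mem_cons.1 hV
    simp only [Multiset.countP_cons, Finset.sum_add_distrib, mul_add, ih hV,
      ← Finset.card_filter, two_mul_card_orthogonal hv hwv, Multiset.card_cons, add_mul, one_mul]

theorem IsArc.exists_isUnit_dotProduct {u : ℕ}
    {M : Multiset (Submodule (ZMod 4) (Fin (n + 1) → ZMod 4))} (hM : IsArc u M)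
    (hcard : 2 * u < M.card) {w : Fin (n + 1) → ZMod 4} (hw : ∃ i, IsUnit (w i)) :
    ∃ v, Submodule.span (ZMod 4) {v} ∈ M ∧ IsUnit (w ⬝ᵥ v) := by
  by_contra! h
  obtain ⟨V, hVu, rfl⟩ := exists_eq_map_span hM.1
  have hV (v) (hv : v ∈ V) : (∃ i, IsUnit (v i)) ∧ ¬IsUnit (w ⬝ᵥ v) :=
    ⟨hVu v hv, h v (Multiset.mem_map_of_mem _ hv)⟩
  have hle (a : Fin (n + 1) → ZMod 4) :
      V.countP (fun v => (w + (2 : ZMod 4) • a) ⬝ᵥ v = 0) ≤ u := by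
    obtain ⟨i, hi⟩ := hw
    have shift : ∀ x y : ZMod 4, IsUnit x → IsUnit (x + 2 * y) := by decide
    exact hM.countP_dotProduct_le (w := w + (2 : ZMod 4) • a) ⟨i, shift (w i) (a i) hi⟩
  have hsum := Finset.sum_le_card_nsmul Finset.univ _ u fun a _ => hle a
  rw [Multiset.card_map] at hcard
  have hcount := two_mul_sum_countP_orthogonal hV
  simp only [Finset.card_univ, Fintype.card_pi, ZMod.card, Finset.prod_const, Fintype.card_fin,
    smul_eq_mul] at hsum
  nlinarith [pow_pos four_pos (n + 1) (M₀ := ℕ)]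

theorem isArc_map_span {u : ℕ} {V : Multiset (Fin (n + 1) → ZMod 4)}
    (hV : ∀ v ∈ V, ∃ i, IsUnit (v i)) (hle : ∀ w : Fin (n + 1) → ZMod 4, (∃ i, IsUnit (w i)) →
      V.countP (fun v => w ⬝ᵥ v = 0) ≤ u) :
    IsArc u (V.map fun v => Submodule.span (ZMod 4) {v}) := by
  refine ⟨fun P hP => ?_, fun H hH => ?_⟩
  · obtain ⟨v, hv, rfl⟩ := Multiset.mem_map.1 hP
    exact ⟨v, hV v hv, rfl⟩
  · obtain ⟨w, hw, rfl⟩ := exists_eq_hyperplane hH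
    simpa only [Multiset.countP_map, span_singleton_le_hyperplane,
      ← Multiset.countP_eq_card_filter] using hle w hw

theorem IsArc.exists_frame {u : ℕ} {M : Multiset (Submodule (ZMod 4) (Fin (n + 1) → ZMod 4))}
    (hM : IsArc u M) (hcard : 2 * u < M.card) :
    ∃ (e : (Fin (n + 1) → ZMod 4) ≃ₗ[ZMod 4] Fin (n + 1) → ZMod 4) (T : _),
      M.map (Submodule.map e.toLinearMap) = frame (ZMod 4) (n + 1) + T := by
  obtain ⟨b, hb⟩ := exists_basis_mem (s := {v | Submodule.span (ZMod 4) {v} ∈ M})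
    fun w hw => hM.exists_isUnit_dotProduct hcard hw
  exact ⟨b.equivFun, exists_map_eq_frame_add b hb⟩

end Averaging

section Monomial

variable {R : Type} [CommRing R] {n : ℕ}

/-- The monomial map scaling the coordinates by `d` and then permuting them by `σ`. -/
def monomialEquiv (d : Fin n → Rˣ) (σ : Equiv.Perm (Fin n)) : (Fin n → R) ≃ₗ[R] Fin n → R :=
  LinearEquiv.piCongrRight (fun i => LinearEquiv.smulOfUnit (d i)) ≪≫ₗ
    LinearEquiv.funCongrLeft R R σ

theorem monomialEquiv_apply (d : Fin n → Rˣ) (σ : Equiv.Perm (Fin n)) (v : Fin n → R) (i : Fin n) :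
    monomialEquiv d σ v i = d (σ i) * v (σ i) :=
  rfl

theorem map_monomialEquiv_frame (d : Fin n → Rˣ) (σ : Equiv.Perm (Fin n)) :
    (frame R n).map (Submodule.map (monomialEquiv d σ).toLinearMap) = frame R n := by
  have map_single (i) : monomialEquiv d σ (Pi.single i 1) = d i • Pi.single (σ.symm i) 1 := by
    ext j
    by_cases h : σ j = i
    · subst h
      simp [monomialEquiv_apply, Units.smul_def]
    · have h' : j ≠ σ.symm i := fun hj => h (by simp [hj])
      simp [monomialEquiv_apply, h, h']
  have map_span (i) : (Submodule.span R {Pi.single i (1 : R)}).map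
      (monomialEquiv d σ).toLinearMap = Submodule.span R {Pi.single (σ.symm i) 1} := by
    rw [Submodule.map_span, Set.image_singleton, LinearEquiv.coe_coe, map_single,
      Submodule.span_singleton_group_smul_eq]
  rw [frame, Multiset.map_map]
  simp only [Function.comp_def, map_span]
  conv_rhs => rw [← Multiset.map_univ_val_equiv σ.symm, Multiset.map_map]
  rfl

/-- Up to unit factors a vector over ℤ/4ℤ has entries 0, 1, 2, and up to permutation these are
increasing. -/
def IsReduced (v : Fin n → ZMod 4) : Prop :=
  (∀ i, (v i).val ≤ 2) ∧ Monotone fun i => (v i).val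

theorem exists_isReduced_monomialEquiv (v : Fin n → ZMod 4) :
    ∃ d σ, IsReduced (monomialEquiv d σ v) := by
  have scale : ∀ x : ZMod 4, ∃ c : (ZMod 4)ˣ, (c * x).val ≤ 2 := by decide
  choose d hd using fun i => scale (v i)
  exact ⟨d, Tuple.sort fun i => (d i * v i).val, fun i => hd _,
    Tuple.monotone_sort fun i => (d i * v i).val⟩

/-- A quantity invariant under monomial maps, which orders the vectors of length at most 4 by the
number of unit entries and then by the number of entries `2`. -/
def weight (v : Fin n → ZMod 4) : ℕ :=
  ∑ i, if IsUnit (v i) then 5 else if v i = 0 then 0 else 1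

theorem weight_monomialEquiv (d : Fin n → (ZMod 4)ˣ) (σ : Equiv.Perm (Fin n))
    (v : Fin n → ZMod 4) : weight (monomialEquiv d σ v) = weight v := by
  simp only [weight, monomialEquiv_apply, Units.isUnit_units_mul, Units.mul_right_eq_zero]
  exact Equiv.sum_comp σ fun i => if IsUnit (v i) then 5 else if v i = 0 then 0 else 1

theorem weight_smul (c : (ZMod 4)ˣ) (v : Fin n → ZMod 4) : weight (c • v) = weight v :=
  weight_monomialEquiv (fun _ => c) 1 v

theorem IsReduced.isNormalized {v : Fin n → ZMod 4} (hv : IsReduced v)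
    (hu : ∃ i, IsUnit (v i)) : IsNormalized v := by
  obtain ⟨c, i, hi, hlt⟩ := exists_isNormalized_smul hu
  have eq_one : ∀ x : ZMod 4, ∀ c : (ZMod 4)ˣ, c • x = 1 → x.val ≤ 2 → x = 1 := by decide
  refine ⟨i, eq_one _ c hi (hv.1 i), fun j hj hju => hlt j hj ?_⟩
  exact c.isUnit.mul hju

theorem IsArc.exists_isReduced {u : ℕ} {M : Multiset (Submodule (ZMod 4) (Fin (n + 1) → ZMod 4))}
    (hM : IsArc u M) (hcard : 2 * u < M.card) (hn : n + 1 < M.card) :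
    ∃ (ρ : Fin (n + 1) → ZMod 4) (V : Multiset (Fin (n + 1) → ZMod 4)),
      IsReduced ρ ∧ IsNormalized ρ ∧ (∀ v ∈ V, IsNormalized v ∧ weight v ≤ weight ρ) ∧
      V.card + (n + 2) = M.card ∧
      IsArc u (frame (ZMod 4) (n + 1) + (ρ ::ₘ V).map fun v => Submodule.span (ZMod 4) {v}) := by
  obtain ⟨e, T, heT⟩ := hM.exists_frame hcard
  have hT := hM.map e
  rw [heT] at hT
  obtain ⟨V, hV, rfl⟩ := exists_eq_map_span fun P hP => hT.1 P (Multiset.mem_add.2 (.inr hP))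
  have hVcard : V.card + (n + 1) = M.card := by
    simpa [frame, add_comm] using (congrArg Multiset.card heT).symm
  obtain ⟨v, hv, hmax⟩ := V.exists_max_image weight (Multiset.card_pos.1 (by omega))
  obtain ⟨V, rfl⟩ := Multiset.exists_cons_of_mem hv
  obtain ⟨d, σ, hρ⟩ := exists_isReduced_monomialEquiv v
  let f := monomialEquiv d σ
  have isUnit_f (x) (hx : x ∈ v ::ₘ V) : ∃ i, IsUnit (f x i) := by
    obtain ⟨i, hi⟩ := hV x hx
    exact ⟨σ.symm i, by simpa [f, monomialEquiv_apply] using hi⟩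
  choose! c hc using fun x hx => exists_isNormalized_smul (isUnit_f x hx)
  refine ⟨f v, V.map fun x => c x • f x, hρ, hρ.isNormalized (isUnit_f v hv), ?_, ?_, ?_⟩
  · simp only [Multiset.mem_map, forall_exists_index, and_imp, forall_apply_eq_imp_iff₂,
      weight_smul, f, weight_monomialEquiv]
    exact fun x hx => ⟨hc x (Multiset.mem_cons_of_mem hx), hmax x (Multiset.mem_cons_of_mem hx)⟩
  · rw [Multiset.card_cons] at hVcard
    rw [Multiset.card_map]
    omega
  · convert hT.map f using 1
    rw [Multiset.map_add, map_monomialEquiv_frame]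
    simp [Submodule.map_span, Submodule.span_singleton_group_smul_eq]

end Monomial

section Search

/-- The levels of a bit-sliced counter, highest first: if bit `j` of the level above `i` further
levels is set, then `cnt j > i`. -/
def IsTally (cnt : ℕ → ℕ) : List ℕ → Prop
  | [] => True
  | c :: cs => (∀ j, c.testBit j → cs.length < cnt j) ∧ IsTally cnt cs

-- The search functions are built from recursors and from the natural number operations that the
-- kernel accelerates, so that the kernel can evaluate the search.

/-- Increment the counters at the bits set in `p`. -/
noncomputable def addMask (p : ℕ) (cs : List ℕ) : List ℕ :=
  cs.rec [] fun c ds ih => Nat.lor c (Nat.land (ds.headD p) p) :: ih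

theorem addMask_cons (p c : ℕ) (cs : List ℕ) :
    addMask p (c :: cs) = (c ||| (cs.headD p &&& p)) :: addMask p cs :=
  rfl

theorem length_addMask (p : ℕ) (cs : List ℕ) : (addMask p cs).length = cs.length := by
  induction cs with
  | nil => rfl
  | cons _ _ ih => exact congrArg (· + 1) ih

theorem IsTally.addMask {cnt : ℕ → ℕ} {cs : List ℕ} (h : IsTally cnt cs) (p : ℕ) :
    IsTally (fun j => cnt j + (p.testBit j).toNat) (addMask p cs) := by
  induction cs with
  | nil => trivial
  | cons c cs ih =>
    refine addMask_cons p c cs ▸ ⟨fun j hj => ?_, ih h.2⟩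
    rw [length_addMask]
    rw [Nat.testBit_or, Nat.testBit_and, Bool.or_eq_true, Bool.and_eq_true] at hj
    obtain hj | ⟨hd, hp⟩ := hj
    · exact Nat.lt_add_right _ (h.1 j hj)
    · simp only [hp]
      cases cs with
      | nil => exact Nat.succ_pos _
      | cons d cs => exact Nat.succ_lt_succ (h.2.1 j hd)

theorem length_foldr_addMask (L cs : List ℕ) : (L.foldr addMask cs).length = cs.length := by
  induction L with
  | nil => rfl
  | cons p L ih => rw [List.foldr_cons, length_addMask, ih]

theorem isTally_replicate_zero (u : ℕ) : IsTally 0 (List.replicate u 0) := by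
  induction u with
  | zero => trivial
  | succ u ih => exact ⟨by simp, ih⟩

theorem isTally_foldr_addMask (L : List ℕ) (u : ℕ) :
    IsTally (fun j => L.countP (·.testBit j)) (L.foldr addMask (List.replicate u 0)) := by
  induction L with
  | nil => exact isTally_replicate_zero u
  | cons p L ih =>
    rw [List.foldr_cons]
    convert ih.addMask p using 2 with j
    cases hp : p.testBit j <;> simp [hp]

/-- Whether `f p (p :: E)` holds for every suffix `p :: E` of `C`. -/
noncomputable def allTails (f : ℕ → List ℕ → Bool) (C : List ℕ) : Bool :=
  C.rec true fun p E ih => Bool.rec false ih (f p (p :: E))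

theorem allTails_cons {f : ℕ → List ℕ → Bool} {p : ℕ} {E : List ℕ} :
    allTails f (p :: E) ↔ f p (p :: E) ∧ allTails f E := by
  change Bool.rec false (allTails f E) (f p (p :: E)) = true ↔ _
  cases f p (p :: E) <;> simp

theorem exists_mem_of_allTails {f : ℕ → List ℕ → Bool} {C : List ℕ} (hC : allTails f C)
    {T : Multiset ℕ} (hT : T ≠ 0) (hTC : ∀ x ∈ T, x ∈ C) :
    ∃ p ∈ T, ∃ E, f p E ∧ ∀ x ∈ T, x ∈ E := by
  induction C with
  | nil =>
    obtain ⟨x, hx⟩ := Multiset.exists_mem_of_ne_zero hT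
    exact absurd (hTC x hx) List.not_mem_nil
  | cons p E ih =>
    obtain ⟨hf, hE⟩ := allTails_cons.1 hC
    by_cases hp : p ∈ T
    · exact ⟨p, hp, p :: E, hf, hTC⟩
    · exact ih hE fun x hx => (List.mem_cons.1 (hTC x hx)).resolve_left fun h => hp (h ▸ hx)

/-- The members of `C` having no bit in common with `c`. -/
noncomputable def disjointMasks (c : ℕ) (C : List ℕ) : List ℕ :=
  C.rec [] fun p _ ih => Bool.rec ih (p :: ih) (Nat.beq (Nat.land p c) 0)

theorem disjointMasks_eq_filter (c : ℕ) (C : List ℕ) :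
    disjointMasks c C = C.filter fun p => Nat.beq (p &&& c) 0 := by
  induction C with
  | nil => rfl
  | cons p C ih =>
    rw [List.filter_cons, ← ih]
    change Bool.rec (motive := fun _ => List ℕ) _ _ (Nat.beq (p &&& c) 0) = _
    cases Nat.beq (p &&& c) 0 <;> rfl

theorem mem_disjointMasks {c p : ℕ} {C : List ℕ} :
    p ∈ disjointMasks c C ↔ p ∈ C ∧ p &&& c = 0 := by
  rw [disjointMasks_eq_filter, List.mem_filter, Nat.beq_eq]

/-- Whether it is impossible to add `r` masks from `C`, with repetition, to the tally `cs` without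
overflow. The candidates overlapping the highest level of the tally are discarded. -/
noncomputable def search (r : ℕ) : List ℕ → List ℕ → Bool :=
  r.rec (fun _ _ => false) fun _ ih cs C =>
    allTails (fun p E => ih (addMask p cs) E) (disjointMasks (cs.headD 0) C)

theorem exists_overflow_of_search {r : ℕ} {cs C : List ℕ} (h : search r cs C) {cnt : ℕ → ℕ}
    (hcs : IsTally cnt cs) {T : Multiset ℕ} (hcard : T.card = r) (hT : ∀ x ∈ T, x ∈ C) :
    ∃ j, cs.length < cnt j + T.countP fun x => x.testBit j := by
  induction r generalizing cs C cnt T with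
  | zero => cases h
  | succ r ih =>
    by_cases hdisj : ∀ x ∈ T, x ∈ disjointMasks (cs.headD 0) C
    · have hT0 : T ≠ 0 := by
        rintro rfl
        cases hcard
      obtain ⟨p, hp, E, hE, hTE⟩ := exists_mem_of_allTails h hT0 hdisj
      obtain ⟨T, rfl⟩ := Multiset.exists_cons_of_mem hp
      obtain ⟨j, hj⟩ := ih hE (hcs.addMask p) (by simpa using hcard) fun x hx =>
        hTE x (Multiset.mem_cons_of_mem hx)
      refine ⟨j, ?_⟩
      rw [length_addMask] at hj
      rw [Multiset.countP_cons]
      cases hpj : p.testBit j <;> simp_all [add_assoc, add_comm]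
    · push Not at hdisj
      obtain ⟨x, hx, hxcs⟩ := hdisj
      have hne : x &&& cs.headD 0 ≠ 0 := fun h => hxcs (mem_disjointMasks.2 ⟨hT x hx, h⟩)
      obtain ⟨j, hj⟩ := Nat.exists_testBit_of_ne_zero hne
      rw [Nat.testBit_and, Bool.and_eq_true] at hj
      cases cs with
      | nil => simp at hj
      | cons c cs =>
        have hpos : 0 < T.countP fun x => x.testBit j := Multiset.countP_pos.2 ⟨x, hx, hj.1⟩
        exact ⟨j, Nat.add_lt_add_of_lt_of_le (hcs.1 j hj.2) hpos⟩

theorem exists_lt_countP_testBit {r u : ℕ} {L C : List ℕ}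
    (h : search r (L.foldr addMask (List.replicate u 0)) C) {T : Multiset ℕ} (hcard : T.card = r)
    (hT : ∀ x ∈ T, x ∈ C) : ∃ j, u < (L + T : Multiset ℕ).countP fun x => x.testBit j := by
  obtain ⟨j, hj⟩ := exists_overflow_of_search h (isTally_foldr_addMask L u) hcard hT
  rw [length_foldr_addMask, List.length_replicate] at hj
  exact ⟨j, by simpa using hj⟩

end Search

section Enumeration

/-- The vectors of length 4 over ℤ/4ℤ. -/
def vectors : List (Fin 4 → ZMod 4) :=
  let scalars : List (ZMod 4) := [0, 1, 2, 3]
  scalars.flatMap fun a => scalars.flatMap fun b => scalars.flatMap fun c => scalars.map fun d =>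
    ![a, b, c, d]

theorem mem_vectors (v : Fin 4 → ZMod 4) : v ∈ vectors := by
  have mem_scalars : ∀ a : ZMod 4, a ∈ ([0, 1, 2, 3] : List (ZMod 4)) := by decide
  simp only [vectors, List.mem_flatMap, List.mem_map]
  exact ⟨v 0, mem_scalars _, v 1, mem_scalars _, v 2, mem_scalars _, v 3, mem_scalars _,
    (List.ofFn_injective rfl : ![v 0, v 1, v 2, v 3] = v)⟩

instance {n : ℕ} : DecidablePred (IsNormalized (R := ZMod 4) (n := n)) := fun v =>
  inferInstanceAs (Decidable (∃ i, v i = 1 ∧ ∀ j < i, ¬IsUnit (v j)))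

instance {n : ℕ} : DecidablePred (IsReduced (n := n)) := fun v =>
  inferInstanceAs (Decidable ((∀ i, (v i).val ≤ 2) ∧ ∀ ⦃i j⦄, i ≤ j → (v i).val ≤ (v j).val))

/-- One generator for each of the 120 points of PHG(3, ℤ/4ℤ). -/
def normalizedVectors : List (Fin 4 → ZMod 4) :=
  vectors.filter fun v => IsNormalized v

theorem mem_normalizedVectors {v : Fin 4 → ZMod 4} : v ∈ normalizedVectors ↔ IsNormalized v := by
  simp [normalizedVectors, mem_vectors]

/-- Orthogonality, decided by natural number arithmetic for the sake of kernel reduction. -/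
def isOrthogonal (w v : Fin 4 → ZMod 4) : Bool :=
  Nat.beq (Nat.mod (Nat.add (Nat.add (Nat.mul (w 0).val (v 0).val) (Nat.mul (w 1).val (v 1).val))
    (Nat.add (Nat.mul (w 2).val (v 2).val) (Nat.mul (w 3).val (v 3).val))) 4) 0

theorem isOrthogonal_iff {w v : Fin 4 → ZMod 4} : isOrthogonal w v ↔ w ⬝ᵥ v = 0 := by
  have cast_eq : w ⬝ᵥ v = ((w 0).val * (v 0).val + (w 1).val * (v 1).val +
      ((w 2).val * (v 2).val + (w 3).val * (v 3).val) : ℕ) := by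
    simp [dotProduct, Fin.sum_univ_four, add_assoc]
  rw [cast_eq, ZMod.natCast_eq_zero_iff, Nat.dvd_iff_mod_eq_zero]
  exact Nat.beq_eq ▸ Iff.rfl

/-- The set of vectors in `L` that are orthogonal to `v`, bit `j` standing for `L[j]`. -/
def orthogonalMask (L : List (Fin 4 → ZMod 4)) (v : Fin 4 → ZMod 4) : ℕ :=
  L.foldr (fun w => Nat.bit (isOrthogonal w v)) 0

theorem testBit_orthogonalMask {L : List (Fin 4 → ZMod 4)} {v : Fin 4 → ZMod 4} {j : ℕ} :
    (orthogonalMask L v).testBit j ↔ ∃ w, L[j]? = some w ∧ w ⬝ᵥ v = 0 := by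
  induction L generalizing j with
  | nil => simp [orthogonalMask]
  | cons w L ih =>
    rw [orthogonalMask, List.foldr_cons]
    cases j with
    | zero => simp [isOrthogonal_iff]
    | succ j =>
      rw [Nat.testBit_bit_succ, List.getElem?_cons_succ]
      exact ih

theorem exists_forall_testBit_orthogonalMask_iff {L : List (Fin 4 → ZMod 4)} {v : Fin 4 → ZMod 4}
    {j : ℕ} (h : (orthogonalMask L v).testBit j) :
    ∃ w ∈ L, ∀ x, (orthogonalMask L x).testBit j ↔ w ⬝ᵥ x = 0 := by
  obtain ⟨w, hw, -⟩ := testBit_orthogonalMask.1 h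
  refine ⟨w, List.mem_of_getElem? hw, fun x => ?_⟩
  rw [testBit_orthogonalMask, hw]
  simp

/-- The coordinate vectors of length 4, preceded by `ρ`. -/
def consFrame (ρ : Fin 4 → ZMod 4) : List (Fin 4 → ZMod 4) :=
  ρ :: (List.finRange 4).map fun i => Pi.single i 1

theorem frame_add_map_span (ρ : Fin 4 → ZMod 4) (V : Multiset (Fin 4 → ZMod 4)) :
    frame (ZMod 4) 4 + (ρ ::ₘ V).map (fun v => Submodule.span (ZMod 4) {v}) =
      ((consFrame ρ : Multiset _) + V).map fun v => Submodule.span (ZMod 4) {v} := by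
  rw [Multiset.map_cons, Multiset.add_cons, consFrame, ← Multiset.cons_coe, Multiset.cons_add,
    Multiset.map_cons, Multiset.map_add, ← Multiset.map_coe, Multiset.map_map]
  rfl

theorem search_normalizedVectors : ∀ ρ ∈ normalizedVectors.filter fun v => IsReduced v,
    search 6 (((consFrame ρ).map (orthogonalMask normalizedVectors)).foldr addMask
        (List.replicate 4 0))
      ((normalizedVectors.filter fun v => weight v ≤ weight ρ).map
        (orthogonalMask normalizedVectors)) := by
  decide +kernel

theorem IsArc.card_ne_eleven {M : Multiset (Submodule (ZMod 4) (Fin 4 → ZMod 4))}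
    (hM : IsArc 4 M) : M.card ≠ 11 := by
  intro hcard
  obtain ⟨ρ, V, hρ, hρn, hV, hVcard, harc⟩ := hM.exists_isReduced (by omega) (by omega)
  rw [frame_add_map_span] at harc
  let m := orthogonalMask normalizedVectors
  obtain ⟨j, hj⟩ := exists_lt_countP_testBit (T := V.map m)
    (search_normalizedVectors ρ
      (List.mem_filter.2 ⟨mem_normalizedVectors.2 hρn, decide_eq_true hρ⟩))
    (by rw [Multiset.card_map]; omega)
    (by
      simp only [Multiset.mem_map, List.mem_map, List.mem_filter, mem_normalizedVectors,
        decide_eq_true_eq]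
      exact fun x ⟨v, hv, hx⟩ => ⟨v, hV v hv, hx⟩)
  rw [← Multiset.map_coe, ← Multiset.map_add, Multiset.countP_map,
    ← Multiset.countP_eq_card_filter] at hj
  obtain ⟨v, -, hv⟩ := Multiset.countP_pos.1 (pos_of_gt hj)
  obtain ⟨w, hw, hwj⟩ := exists_forall_testBit_orthogonalMask_iff hv
  refine hj.not_ge (le_of_eq_of_le ?_
    (harc.countP_dotProduct_le (mem_normalizedVectors.1 hw).exists_isUnit))
  exact Multiset.countP_congr rfl fun x _ => propext (hwj x)

end Enumeration

section TenPoints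

/-- Generators of the points of a 4-arc, found by computer search. -/
def tenVectors : List (Fin 4 → ZMod 4) :=
  [![0, 0, 0, 1], ![0, 0, 1, 0], ![0, 1, 0, 0], ![1, 0, 0, 0], ![0, 1, 2, 1],
    ![1, 3, 3, 3], ![2, 1, 1, 2], ![2, 1, 2, 0], ![1, 3, 0, 2], ![1, 0, 1, 1]]

theorem countP_tenVectors_le {w : Fin 4 → ZMod 4} (hw : ∃ i, IsUnit (w i)) :
    tenVectors.countP (fun v => w ⬝ᵥ v = 0) ≤ 4 := by
  have count : vectors.all fun w => (∃ i, IsUnit (w i)) →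
      tenVectors.countP (isOrthogonal w) ≤ 4 := by decide +kernel
  have isOrthogonal_eq : isOrthogonal w = fun v => decide (w ⬝ᵥ v = 0) :=
    funext fun v => by rw [Bool.eq_iff_iff, isOrthogonal_iff, decide_eq_true_iff]
  rw [← isOrthogonal_eq]
  exact of_decide_eq_true (List.all_eq_true.1 count w (mem_vectors w)) hw

theorem isArc_tenVectors :
    IsArc 4 ((tenVectors : Multiset (Fin 4 → ZMod 4)).map fun v =>
      Submodule.span (ZMod 4) {v}) :=
  isArc_map_span (by decide +kernel) fun _ hw => countP_tenVectors_le hw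

end TenPoints

end PHG

/-- Every multiset of 11 points of PHG(3, ℤ/4ℤ) has a hyperplane containing at least
5 of its points counted with multiplicity; so the maximum size of a 4-arc in
PHG(3, ℤ/4ℤ) is 10 (which is strictly smaller than the value 11 attained over
𝔽₂[X]/(X²)). -/
theorem max_four_arc_Z4_dim3 :
    (∀ M : Multiset (Submodule R4 (Fin 4 → R4)), (∀ P ∈ M, IsPoint P) →
      Multiset.card M = 11 →
      ∃ H : Submodule R4 (Fin 4 → R4), IsHyperplane H ∧
        5 ≤ Multiset.card (M.filter fun P => P ≤ H)) ∧
    (∃ M : Multiset (Submodule R4 (Fin 4 → R4)), (∀ P ∈ M, IsPoint P) ∧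
      Multiset.card M = 10 ∧
      ∀ H : Submodule R4 (Fin 4 → R4), IsHyperplane H →
        Multiset.card (M.filter fun P => P ≤ H) ≤ 4) := by
  refine ⟨fun M hM hcard => ?_, _, PHG.isArc_tenVectors.1, rfl, fun H hH => ?_⟩
  · by_contra! h
    refine PHG.IsArc.card_ne_eleven ⟨hM, fun H hH => ?_⟩ hcard
    rw [Multiset.countP_eq_card_filter]
    exact Nat.le_of_lt_succ (h H hH)
  · rw [← Multiset.countP_eq_card_filter]
    exact PHG.isArc_tenVectors.2 H hH
end
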